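/- For each 0 < ε₁, ε₂ < 1 the following holds for all sufficiently large K. For d > 0, let G be an n-vertex bipartite (ε₁, ε₂·d)-expander with minimum degree δ(G) ≥ d and n ≥ K·d, and set m := ⌊log⁴(n/d)⌋. Suppose d ≥ m^{200} and G contains no copy of TK_{√d·m}^(1). Then for every W ⊆ V(G) with |W| ≤ d·m^{10}, there exists a (100m³, m²)-adjuster P = (v₁, v₂, F₁, F₂, 2, A) in G − W such that 80m³ ≤ ℓ(P) ≤ 80m³ + 80m. -/

import Mathlib

open scoped BigOperators

/-- The average degree of a graph `G`: `(1/|G|) * sum of degrees`. -/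
noncomputable def avgDeg {V : Type*} (G : SimpleGraph V) : Real :=
  (finsum fun v : V => ((G.neighborSet v).ncard : Real)) / (Nat.card V : Real)

/-- The function `eps(x, eps1, k)` from the definition of robust sublinear expanders. -/
noncomputable def epsFun (eps1 k x : Real) : Real :=
  if x < k / 5 then 0 else eps1 / (Real.log (15 * x / k)) ^ 2

/-- The external neighbourhood of a vertex set `X` in a graph `H`. -/
def extNbr {V : Type*} (H : SimpleGraph V) (X : Set V) : Set V :=
  {w : V | w ∉ X ∧ ∃ v ∈ X, H.Adj v w}

/-- `G` is an `(eps1, k)`-robust-expander. -/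
def IsExpander {V : Type*} (G : SimpleGraph V) (eps1 k : Real) : Prop :=
  ∀ X : Set V, k / 2 ≤ (X.ncard : Real) → (X.ncard : Real) ≤ (Nat.card V : Real) / 2 →
    ∀ F : SimpleGraph V, F ≤ G →
      (F.edgeSet.ncard : Real) ≤ avgDeg G * epsFun eps1 k (X.ncard) * (X.ncard : Real) →
      epsFun eps1 k (X.ncard) * (X.ncard : Real) ≤ ((extNbr (G \ F) X).ncard : Real)

/-- The minimum degree of `G` is at least `d`. -/
def minDegGe {V : Type*} (G : SimpleGraph V) (d : Real) : Prop :=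
  ∀ v : V, d ≤ ((G.neighborSet v).ncard : Real)

/-- `G` is bipartite with parts `A` and its complement. -/
def IsBipartiteWith {V : Type*} (G : SimpleGraph V) (A : Set V) : Prop :=
  ∀ ⦃v w : V⦄, G.Adj v w → (v ∈ A ↔ w ∉ A)

/-- `G` is bipartite. -/
def IsBipartite {V : Type*} (G : SimpleGraph V) : Prop :=
  ∃ A : Set V, IsBipartiteWith G A

/-- `S` is the vertex set of a copy of `TK_t^(l)` in `G`: a balanced subdivision of the
complete graph `K_t` in which each edge is replaced by a path with `l` internal vertices
(i.e. of length `l + 1`); the paths are pairwise internally vertex disjoint. -/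
def IsTK {V : Type*} (G : SimpleGraph V) (t l : Nat) (S : Set V) : Prop :=
  ∃ b : Fin t → V, Function.Injective b ∧
    ∃ P : ∀ i j : Fin t, i < j → G.Walk (b i) (b j),
      (∀ i j (h : i < j), (P i j h).IsPath) ∧
      (∀ i j (h : i < j), (P i j h).length = l + 1) ∧
      (∀ i j (h : i < j), ∀ i' j' (h' : i' < j'), (i, j) ≠ (i', j') →
        ∀ v : V, v ∈ (P i j h).support → v ∈ (P i' j' h').support →
          (v = b i ∨ v = b j) ∧ (v = b i' ∨ v = b j')) ∧
      S = {v : V | ∃ (i j : Fin t) (h : i < j), v ∈ (P i j h).support}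

/-- `G` contains a copy of `TK_t^(l)`. -/
def HasTK {V : Type*} (G : SimpleGraph V) (t l : Nat) : Prop :=
  ∃ S : Set V, IsTK G t l S

/-- An `(h₀, h₁, L)`-unit in `G`: a core vertex, `h₀` pairwise vertex disjoint `h₁`-stars
with centres `centre i` and leaves `leaf i j`, together with core-centre paths, pairwise
internally vertex disjoint and disjoint from the stars, all of the same length `< L`. -/
structure UnitIn {V : Type*} (G : SimpleGraph V) (h₀ h₁ L : Nat) where
  core : V
  centre : Fin h₀ → V
  leaf : Fin h₀ → Fin h₁ → V
  path : ∀ i : Fin h₀, G.Walk core (centre i)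
  pathLen : Nat
  pathLen_pos : 0 < pathLen
  pathLen_lt : pathLen < L
  path_isPath : ∀ i, (path i).IsPath
  path_length : ∀ i, (path i).length = pathLen
  star_adj : ∀ i j, G.Adj (centre i) (leaf i j)
  centre_inj : Function.Injective centre
  leaf_inj : Function.Injective fun p : Fin h₀ × Fin h₁ => leaf p.1 p.2
  centre_ne_leaf : ∀ i j k, centre i ≠ leaf j k
  paths_disjoint : ∀ i j, i ≠ j →
    ∀ x : V, x ∈ (path i).support → x ∈ (path j).support → x = core
  leaf_notin_path : ∀ i j k, leaf j k ∉ (path i).support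

namespace UnitIn

variable {V : Type*} {G : SimpleGraph V} {h₀ h₁ L : Nat}

/-- The interior of a unit: the union of the vertex sets of its core-centre paths. -/
def interior (U : UnitIn G h₀ h₁ L) : Set V :=
  {x : V | ∃ i, x ∈ (U.path i).support}

/-- The vertex set of a unit. -/
def verts (U : UnitIn G h₀ h₁ L) : Set V :=
  U.interior ∪ Set.range fun p : Fin h₀ × Fin h₁ => U.leaf p.1 p.2

/-- The boundary of a unit. -/
def boundary (U : UnitIn G h₀ h₁ L) : Set V :=
  U.verts \ U.interior

end UnitIn

/-- An `(l, k)`-adjuster in `G` (relative to `d` and `m`): two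
`(z·√d·m⁶, √d·m²², 10m)`-units `F₁`, `F₂` with disjoint interiors, `z ∈ [1,3]`, a vertex
set `A` of size at most `2l` disjoint from the units, and `k + 1` paths between the two
core vertices inside `A ∪ {cores}` whose lengths are `l', l' + 2, …, l' + 2k` with `l' ≤ l`. -/
structure AdjusterIn {V : Type*} (G : SimpleGraph V) (d : Real) (m l k : Nat) where
  z : Real
  z_ge : 1 ≤ z
  z_le : z ≤ 3
  F₁ : UnitIn G ⌈z * Real.sqrt d * (m : Real) ^ 6⌉₊ ⌈Real.sqrt d * (m : Real) ^ 22⌉₊ (10 * m)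
  F₂ : UnitIn G ⌈z * Real.sqrt d * (m : Real) ^ 6⌉₊ ⌈Real.sqrt d * (m : Real) ^ 22⌉₊ (10 * m)
  int_disj : F₁.interior ∩ F₂.interior = ∅
  A : Set V
  A_card : A.ncard ≤ 2 * l
  A_disj : A ∩ (F₁.verts ∪ F₂.verts) = ∅
  l' : Nat
  l'_le : l' ≤ l
  paths : Fin (k + 1) → G.Walk F₁.core F₂.core
  paths_isPath : ∀ i, (paths i).IsPath
  paths_length : ∀ i : Fin (k + 1), (paths i).length = l' + 2 * (i : Nat)
  paths_support : ∀ i, ∀ x ∈ (paths i).support, x ∈ A ∪ {F₁.core, F₂.core}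

namespace AdjusterIn

variable {V : Type*} {G : SimpleGraph V} {d : Real} {m l k : Nat}

/-- The length `ℓ(P) = l' + 2k` of an adjuster. -/
def len (P : AdjusterIn G d m l k) : Nat := P.l' + 2 * k

/-- The perimeter `p(P) = A ∪ int(F₁) ∪ int(F₂)` of an adjuster. -/
def perimeter (P : AdjusterIn G d m l k) : Set V :=
  P.A ∪ P.F₁.interior ∪ P.F₂.interior

/-- The full vertex set of an adjuster. -/
def verts (P : AdjusterIn G d m l k) : Set V :=
  P.A ∪ P.F₁.verts ∪ P.F₂.verts

end AdjusterIn

section Helpers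

open Finset Classical

/-- Deleting heavy vertices one by one. -/
lemma select_light {V : Type} (w : V → V → ℝ) (hw : ∀ a b, 0 ≤ w a b) (hd : ∀ a, w a a = 0)
    (t : ℕ) (ht : 1 ≤ t) (k : ℕ) : ∀ S : Finset V, S.card = t + k →
    ∃ T ⊆ S, T.card = t ∧
      (∑ a ∈ T, ∑ b ∈ T, w a b) * (S.card : ℝ) ^ 2 ≤ (t : ℝ) ^ 2 * ∑ a ∈ S, ∑ b ∈ S, w a b := by
  induction k with
  | zero =>
    intro S hS
    refine ⟨S, Subset.refl _, by simpa using hS, ?_⟩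
    rw [hS]; simp [mul_comm]
  | succ k ih =>
    intro S hS
    set Φ : ℝ := ∑ a ∈ S, ∑ b ∈ S, w a b with hΦ
    have hΦ0 : 0 ≤ Φ := sum_nonneg fun a _ => sum_nonneg fun b _ => hw a b
    have hne : S.Nonempty := by
      rw [← card_pos]; omega
    have key : ∑ a ∈ S, ∑ x ∈ S.erase a, ∑ y ∈ S.erase a, w x y = ((S.card : ℝ) - 2) * Φ := by
      have h1 : ∀ a ∈ S, ∑ x ∈ S.erase a, ∑ y ∈ S.erase a, w x y
          = Φ - (∑ x ∈ S, w x a) - ∑ y ∈ S, w a y := by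
        intro a ha
        have h2 : ∀ x, ∑ y ∈ S.erase a, w x y = (∑ y ∈ S, w x y) - w x a := fun x =>
          sum_erase_eq_sub ha
        rw [sum_erase_eq_sub ha]
        simp only [h2, hd, sub_zero, sum_sub_distrib]
        rfl
      rw [sum_congr rfl h1]
      simp only [sum_sub_distrib]
      rw [sum_comm (s := S) (t := S) (f := fun a x => w x a)]
      simp only [sum_const, nsmul_eq_mul]
      ring
    obtain ⟨a, ha, hle⟩ : ∃ a ∈ S, (S.card : ℝ) * ∑ x ∈ S.erase a, ∑ y ∈ S.erase a, w x y
        ≤ ((S.card : ℝ) - 2) * Φ := by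
      by_contra hcon
      push Not at hcon
      have h3 := sum_lt_sum_of_nonempty hne hcon
      rw [← mul_sum _ _ (S.card : ℝ), key] at h3
      simp only [sum_const, nsmul_eq_mul] at h3
      linarith
    have hc : (S.erase a).card = t + k := by
      rw [card_erase_of_mem ha]; omega
    obtain ⟨T, hTS, hT, hTle⟩ := ih _ hc
    refine ⟨T, hTS.trans (erase_subset _ _), hT, ?_⟩
    have hSc : (S.card : ℝ) = (t : ℝ) + k + 1 := by rw [hS]; push_cast; ring
    have hec : ((S.erase a).card : ℝ) = (t : ℝ) + k := by rw [hc]; push_cast; ring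
    rw [hec] at hTle
    set u : ℝ := (t : ℝ) + k with hu
    have hu1 : (1 : ℝ) ≤ u := by
      have : (1 : ℝ) ≤ t := by exact_mod_cast ht
      have : (0 : ℝ) ≤ k := by positivity
      linarith
    rw [hSc] at hle ⊢
    set A := ∑ a ∈ T, ∑ b ∈ T, w a b
    set B := ∑ x ∈ S.erase a, ∑ y ∈ S.erase a, w x y
    have hB : B * (u + 1) ^ 2 ≤ u ^ 2 * Φ := by
      have : (u + 1) * ((u + 1) * B) ≤ (u + 1) * ((u + 1 - 2) * Φ) :=
        mul_le_mul_of_nonneg_left hle (by linarith)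
      nlinarith
    have h5 : u ^ 2 * (A * (u + 1) ^ 2) ≤ u ^ 2 * ((t : ℝ) ^ 2 * Φ) := by
      calc u ^ 2 * (A * (u + 1) ^ 2) = (A * u ^ 2) * (u + 1) ^ 2 := by ring
        _ ≤ ((t : ℝ) ^ 2 * B) * (u + 1) ^ 2 := mul_le_mul_of_nonneg_right hTle (by positivity)
        _ = (t : ℝ) ^ 2 * (B * (u + 1) ^ 2) := by ring
        _ ≤ (t : ℝ) ^ 2 * (u ^ 2 * Φ) := mul_le_mul_of_nonneg_left hB (by positivity)
        _ = _ := by ring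
    exact le_of_mul_le_mul_left h5 (by positivity)

/-- The neighbourhood as a finset. -/
noncomputable def nb {V : Type} [Fintype V] (G : SimpleGraph V) (v : V) : Finset V :=
  univ.filter fun w => G.Adj v w

lemma mem_nb {V : Type} [Fintype V] {G : SimpleGraph V} {v w : V} : w ∈ nb G v ↔ G.Adj v w := by
  simp [nb]

/-- Building a 1-subdivision from a light set. -/
lemma hasTK_of_light {V : Type} [Fintype V] (G : SimpleGraph V) (t : ℕ) (T X : Finset V)
    (hT : T.card = t) (hTX : Disjoint T X) (x0 : V) (hx0 : x0 ∈ X) (hx0T : ∀ a ∈ T, G.Adj x0 a)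
    (hlight : ∑ a ∈ T, ∑ b ∈ T, (if a = b then (0 : ℝ) else
      ((X.filter fun x => G.Adj x a ∧ G.Adj x b).card : ℝ)⁻¹) ≤ 1) : HasTK G t 1 := by
  let e : Fin t ≃ T := (T.equivFinOfCardEq hT).symm
  let b : Fin t → V := fun i => (e i : V)
  have hbT : ∀ i, b i ∈ T := fun i => (e i).2
  have hbinj : Function.Injective b := fun i j h => e.injective (Subtype.ext h)
  let cd : V → V → Finset V := fun a b => X.filter fun x => G.Adj x a ∧ G.Adj x b
  let ι := {p : Fin t × Fin t // p.1 < p.2}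
  let fam : ι → Finset V := fun p => cd (b p.1.1) (b p.1.2)
  have hfam0 : ∀ p, x0 ∈ fam p := fun p =>
    mem_filter.2 ⟨hx0, hx0T _ (hbT _), hx0T _ (hbT _)⟩
  have hall : ∀ s : Finset ι, s.card ≤ (s.biUnion fam).card := by
    intro s
    by_contra hlt
    push Not at hlt
    have hsne : s.Nonempty := by rw [← card_pos]; omega
    have hs0 : (0 : ℝ) < s.card := by exact_mod_cast hsne.card_pos
    have h1 : ∀ p ∈ s, ((s.card : ℝ))⁻¹ < ((fam p).card : ℝ)⁻¹ := by
      intro p hp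
      have h2 : (fam p).card < s.card := lt_of_le_of_lt (card_le_card (subset_biUnion_of_mem fam hp)) hlt
      have h3 : 0 < (fam p).card := card_pos.2 ⟨_, hfam0 p⟩
      exact inv_strictAnti₀ (by exact_mod_cast h3) (by exact_mod_cast h2)
    have h4 := sum_lt_sum_of_nonempty hsne h1
    simp only [sum_const, nsmul_eq_mul] at h4
    rw [mul_inv_cancel₀ hs0.ne'] at h4
    have h5 : ∑ p ∈ s, ((fam p).card : ℝ)⁻¹ ≤ ∑ a ∈ T, ∑ b ∈ T, (if a = b then (0 : ℝ) else
      ((cd a b).card : ℝ)⁻¹) := by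
      rw [← sum_product']
      let emb : ι ↪ V × V := ⟨fun p => (b p.1.1, b p.1.2), by
        intro p q h
        simp only [Prod.mk.injEq] at h
        exact Subtype.ext (Prod.ext (hbinj h.1) (hbinj h.2))⟩
      have h6 : ∑ p ∈ s, ((fam p).card : ℝ)⁻¹ = ∑ q ∈ s.map emb, (if q.1 = q.2 then (0 : ℝ) else
          ((cd q.1 q.2).card : ℝ)⁻¹) := by
        rw [sum_map]
        refine sum_congr rfl fun p _ => ?_
        have : b p.1.1 ≠ b p.1.2 := fun h => (ne_of_lt p.2) (hbinj h)
        change _ = if b p.1.1 = b p.1.2 then (0 : ℝ) else ((cd (b p.1.1) (b p.1.2)).card : ℝ)⁻¹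
        rw [if_neg this]
      rw [h6]
      refine sum_le_sum_of_subset_of_nonneg ?_ ?_
      · intro q hq
        obtain ⟨p, _, rfl⟩ := mem_map.1 hq
        exact mem_product.2 ⟨hbT _, hbT _⟩
      · intro q _ _
        split_ifs
        · exact le_rfl
        · positivity
    have := hlight
    linarith
  obtain ⟨f, hfinj, hf⟩ := (Finset.all_card_le_biUnion_card_iff_exists_injective fam).1 hall
  have hfX : ∀ p, f p ∈ X := fun p => (mem_filter.1 (hf p)).1
  have hf1 : ∀ p, G.Adj (b p.1.1) (f p) := fun p => ((mem_filter.1 (hf p)).2.1).symm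
  have hf2 : ∀ p, G.Adj (f p) (b p.1.2) := fun p => ((mem_filter.1 (hf p)).2.2)
  have hbf : ∀ i p, b i ≠ f p := fun i p h =>
    (disjoint_left.1 hTX (hbT i)) (h ▸ hfX p)
  refine ⟨_, b, hbinj, fun i j h => .cons (hf1 ⟨(i, j), h⟩) (.cons (hf2 ⟨(i, j), h⟩) .nil),
    ?_, ?_, ?_, rfl⟩
  · intro i j h
    have h1 : b i ≠ b j := fun hh => (ne_of_lt h) (hbinj hh)
    have h2 := hbf i ⟨(i, j), h⟩
    have h3 := hbf j ⟨(i, j), h⟩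
    simp [SimpleGraph.Walk.cons_isPath_iff, h1, h2, h3.symm]
  · intro i j h
    simp
  · intro i j h i' j' h' hne v hv hv'
    simp only [SimpleGraph.Walk.support_cons, SimpleGraph.Walk.support_nil, List.mem_cons,
      List.not_mem_nil, or_false] at hv hv'
    have hff : f ⟨(i, j), h⟩ ≠ f ⟨(i', j'), h'⟩ := fun hh => hne (congrArg Subtype.val (hfinj hh))
    rcases hv with hv | hv | hv
    · rcases hv' with hv' | hv' | hv'
      · exact ⟨Or.inl hv, Or.inl hv'⟩
      · exact absurd (hv.symm.trans hv') (hbf _ _)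
      · exact ⟨Or.inl hv, Or.inr hv'⟩
    · rcases hv' with hv' | hv' | hv'
      · exact absurd (hv'.symm.trans hv) (hbf _ _)
      · exact absurd (hv.symm.trans hv') hff
      · exact absurd (hv'.symm.trans hv) (hbf _ _)
    · rcases hv' with hv' | hv' | hv'
      · exact ⟨Or.inr hv, Or.inl hv'⟩
      · exact absurd (hv.symm.trans hv') (hbf _ _)
      · exact ⟨Or.inr hv, Or.inr hv'⟩

lemma few_bad {V : Type} [Fintype V] (G : SimpleGraph V) (d : ℝ) (m c : ℕ) (hm : 16 ≤ m)
    (hd : (m : ℝ) ^ 200 ≤ d) (hno : ¬ HasTK G ⌈Real.sqrt d * (m : ℝ)⌉₊ 1)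
    (W : Finset V) (hW : (W.card : ℝ) ≤ d * (m : ℝ) ^ c) :
    ((univ.filter fun x => x ∉ W ∧ d / 2 ≤ ((nb G x ∩ W).card : ℝ)).card : ℝ)
      ≤ d * (m : ℝ) ^ (2 * c + 3) := by
  by_contra hcon
  push Not at hcon
  set X := univ.filter fun x => x ∉ W ∧ d / 2 ≤ ((nb G x ∩ W).card : ℝ) with hX
  have hmR : (16 : ℝ) ≤ m := by exact_mod_cast hm
  have hm1 : (1 : ℝ) ≤ m := by linarith
  have hd0 : 0 < d := lt_of_lt_of_le (by positivity) hd
  set r := Real.sqrt d with hr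
  have hr2 : r * r = d := Real.mul_self_sqrt hd0.le
  have hrm : (m : ℝ) ^ 100 ≤ r := by
    apply Real.le_sqrt_of_sq_le
    rw [← pow_mul]; exact hd
  have hr0 : 0 < r := lt_of_lt_of_le (by positivity) hrm
  have hX0 : (0 : ℝ) < X.card := lt_of_le_of_lt (by positivity) hcon
  have hXne : X.Nonempty := by rw [← card_pos]; exact_mod_cast hX0
  let w : V → V → ℝ := fun a b => if a = b then (0 : ℝ) else
      ((X.filter fun x => G.Adj x a ∧ G.Adj x b).card : ℝ)⁻¹
  have hw0 : ∀ a b, 0 ≤ w a b := by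
    intro a b
    simp only [w]
    split_ifs
    · exact le_rfl
    · positivity
  have hwd : ∀ a, w a a = 0 := by intro a; simp [w]
  have hsum : ∑ x ∈ X, ∑ a ∈ nb G x ∩ W, ∑ b ∈ nb G x ∩ W, w a b ≤ (W.card : ℝ) ^ 2 := by
    have h1 : ∀ x ∈ X, ∑ a ∈ nb G x ∩ W, ∑ b ∈ nb G x ∩ W, w a b =
        ∑ a ∈ W, ∑ b ∈ W, if G.Adj x a ∧ G.Adj x b then w a b else 0 := by
      intro x _
      have h2 : nb G x ∩ W = W.filter fun a => G.Adj x a := by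
        ext a; simp [mem_nb, and_comm]
      rw [h2, sum_filter]
      refine sum_congr rfl fun a _ => ?_
      rw [sum_filter]
      by_cases h : G.Adj x a
      · simp [h]
      · simp [h]
    rw [sum_congr rfl h1, sum_comm]
    have h3 : ∀ a ∈ W, ∑ x ∈ X, ∑ b ∈ W, (if G.Adj x a ∧ G.Adj x b then w a b else 0) ≤ (W.card : ℝ) := by
      intro a _
      rw [sum_comm]
      have h4 : ∀ b ∈ W, ∑ x ∈ X, (if G.Adj x a ∧ G.Adj x b then w a b else 0) ≤ (1 : ℝ) := by
        intro b _
        rw [← sum_filter, sum_const, nsmul_eq_mul]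
        simp only [w]
        split_ifs
        · simp
        · exact mul_inv_le_one
      calc _ ≤ ∑ b ∈ W, (1 : ℝ) := sum_le_sum h4
        _ = _ := by simp
    calc _ ≤ ∑ a ∈ W, (W.card : ℝ) := sum_le_sum h3
      _ = _ := by simp [sq]
  obtain ⟨x0, hx0, hx0le⟩ : ∃ x ∈ X, (X.card : ℝ) * ∑ a ∈ nb G x ∩ W, ∑ b ∈ nb G x ∩ W, w a b
      ≤ (W.card : ℝ) ^ 2 := by
    by_contra hc
    push Not at hc
    have h3 := sum_lt_sum_of_nonempty hXne hc
    rw [← mul_sum] at h3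
    simp only [sum_const, nsmul_eq_mul] at h3
    have := lt_of_mul_lt_mul_left h3 hX0.le
    linarith
  set U := nb G x0 ∩ W with hU
  have hUc : d / 2 ≤ (U.card : ℝ) := (mem_filter.1 hx0).2.2
  set t := ⌈r * (m : ℝ)⌉₊ with ht
  have htlt : (t : ℝ) < r * m + 1 := Nat.ceil_lt_add_one (by positivity)
  have ht1 : 1 ≤ t := Nat.one_le_iff_ne_zero.2 (by
    have : 0 < t := Nat.ceil_pos.2 (by positivity)
    omega)
  have hrm1 : (1 : ℝ) ≤ r * m := by
    have : (1 : ℝ) ≤ (m : ℝ) ^ 100 := one_le_pow₀ hm1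
    nlinarith
  have htle2 : (t : ℝ) ≤ 2 * (r * m) := by linarith
  have h8 : 8 * (m : ℝ) ≤ r := by
    have : (m : ℝ) ^ 2 ≤ (m : ℝ) ^ 100 := pow_le_pow_right₀ hm1 (by norm_num)
    nlinarith
  have htU : t ≤ U.card := by
    have : (t : ℝ) ≤ U.card := by nlinarith
    exact_mod_cast this
  obtain ⟨T, hTU, hT, hTle⟩ := select_light w hw0 hwd t ht1 (U.card - t) U (by omega)
  apply hno
  have hTX : Disjoint T X := by
    rw [disjoint_left]
    intro a ha haX
    exact (mem_filter.1 haX).2.1 (mem_inter.1 (hTU ha)).2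
  refine hasTK_of_light G t T X hT hTX x0 hx0 (fun a ha => mem_nb.1 (mem_inter.1 (hTU ha)).1) ?_
  change ∑ a ∈ T, ∑ b ∈ T, w a b ≤ 1
  set A := ∑ a ∈ T, ∑ b ∈ T, w a b
  set B := ∑ a ∈ U, ∑ b ∈ U, w a b
  have hA0 : 0 ≤ A := sum_nonneg fun a _ => sum_nonneg fun b _ => hw0 a b
  by_contra hA1
  push Not at hA1
  -- chain of inequalities
  have i1 : (X.card : ℝ) * (U.card : ℝ) ^ 2 ≤ (t : ℝ) ^ 2 * (W.card : ℝ) ^ 2 := by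
    calc (X.card : ℝ) * (U.card : ℝ) ^ 2 ≤ X.card * (A * (U.card : ℝ) ^ 2) := by
          apply mul_le_mul_of_nonneg_left _ hX0.le
          nlinarith [sq_nonneg (U.card : ℝ)]
      _ ≤ X.card * ((t : ℝ) ^ 2 * B) := mul_le_mul_of_nonneg_left hTle hX0.le
      _ = (t : ℝ) ^ 2 * (X.card * B) := by ring
      _ ≤ _ := mul_le_mul_of_nonneg_left hx0le (by positivity)
  have i2 : (t : ℝ) ^ 2 ≤ 4 * d * (m : ℝ) ^ 2 := by
    calc (t : ℝ) ^ 2 ≤ (2 * (r * m)) ^ 2 := pow_le_pow_left₀ (by positivity) htle2 2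
      _ = 4 * (r * r) * (m : ℝ) ^ 2 := by ring
      _ = _ := by rw [hr2]
  have i3 : (W.card : ℝ) ^ 2 ≤ d ^ 2 * (m : ℝ) ^ (2 * c) := by
    calc (W.card : ℝ) ^ 2 ≤ (d * (m : ℝ) ^ c) ^ 2 := pow_le_pow_left₀ (by positivity) hW 2
      _ = _ := by ring
  have i4 : d ^ 2 / 4 ≤ (U.card : ℝ) ^ 2 := by
    calc d ^ 2 / 4 = (d / 2) ^ 2 := by ring
      _ ≤ _ := pow_le_pow_left₀ (by positivity) hUc 2
  have i5 : (d * (m : ℝ) ^ (2 * c + 3)) * (d ^ 2 / 4) < (4 * d * (m : ℝ) ^ 2) * (d ^ 2 * (m : ℝ) ^ (2 * c)) := by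
    calc _ < (X.card : ℝ) * (d ^ 2 / 4) := by
          apply mul_lt_mul_of_pos_right hcon (by positivity)
      _ ≤ (X.card : ℝ) * (U.card : ℝ) ^ 2 := mul_le_mul_of_nonneg_left i4 hX0.le
      _ ≤ _ := i1
      _ ≤ _ := mul_le_mul i2 i3 (by positivity) (by positivity)
  have i6 : (d * (m : ℝ) ^ (2 * c + 3)) * (d ^ 2 / 4) = (d ^ 3 * (m : ℝ) ^ (2 * c + 2)) * (m / 4) := by ring
  have i7 : (4 * d * (m : ℝ) ^ 2) * (d ^ 2 * (m : ℝ) ^ (2 * c)) = (d ^ 3 * (m : ℝ) ^ (2 * c + 2)) * 4 := by ring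
  rw [i6, i7] at i5
  have := lt_of_mul_lt_mul_left i5 (by positivity)
  linarith
/-- External neighbourhood as a finset. -/
noncomputable def en {V : Type} [Fintype V] (G : SimpleGraph V) (X : Finset V) : Finset V :=
  univ.filter fun w => w ∉ X ∧ ∃ v ∈ X, G.Adj v w

lemma mem_en {V : Type} [Fintype V] {G : SimpleGraph V} {X : Finset V} {w : V} :
    w ∈ en G X ↔ w ∉ X ∧ ∃ v ∈ X, G.Adj v w := by
  simp [en]

/-- The working hypotheses, with all asymptotics extracted. -/
structure Setup {V : Type} [Fintype V] (G : SimpleGraph V) (d η : ℝ) (m : ℕ) : Prop where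
  hm : 1000 ≤ m
  hd : (m : ℝ) ^ 200 ≤ d
  hn : d * (m : ℝ) ^ 300 ≤ (Fintype.card V : ℝ)
  hη : 8 ≤ η * m
  hgrow : (Fintype.card V : ℝ) ≤ d * (1 + η / 4) ^ (m - 1)
  hexp : ∀ X : Finset V, d ≤ (X.card : ℝ) → (X.card : ℝ) ≤ (Fintype.card V : ℝ) / 2 →
    η * X.card ≤ ((en G X).card : ℝ)
  hdeg : ∀ v, d ≤ ((nb G v).card : ℝ)
  hbad : ∀ (c : ℕ) (W : Finset V), (W.card : ℝ) ≤ d * (m : ℝ) ^ c →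
    ((univ.filter fun x => x ∉ W ∧ d / 2 ≤ ((nb G x ∩ W).card : ℝ)).card : ℝ)
      ≤ d * (m : ℝ) ^ (2 * c + 3)
  hbip : ∃ A : Set V, IsBipartiteWith G A

/-- Balls around `A` avoiding `W`. -/
noncomputable def ball {V : Type} [Fintype V] (G : SimpleGraph V) (W A : Finset V) : ℕ → Finset V
  | 0 => A
  | j + 1 => ball G W A j ∪ (en G (ball G W A j) \ W)

section
variable {V : Type} [Fintype V] {G : SimpleGraph V} {d η : ℝ} {m : ℕ}

lemma ball_succ (W A : Finset V) (j : ℕ) :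
    ball G W A (j + 1) = ball G W A j ∪ (en G (ball G W A j) \ W) := rfl

lemma ball_sub_succ (W A : Finset V) (j : ℕ) : ball G W A j ⊆ ball G W A (j + 1) :=
  subset_union_left

lemma ball_mono_nat (W A : Finset V) {i j : ℕ} (h : i ≤ j) : ball G W A i ⊆ ball G W A j := by
  induction h with
  | refl => exact Subset.refl _
  | step _ ih => exact ih.trans (ball_sub_succ _ _ _)

lemma ball_step {W A : Finset V} {j : ℕ} {u v : V} (hu : u ∈ ball G W A j) (h : G.Adj u v)
    (hv : v ∉ W) : v ∈ ball G W A (j + 1) := by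
  by_cases hvb : v ∈ ball G W A j
  · exact ball_sub_succ _ _ _ hvb
  · exact mem_union_right _ (mem_sdiff.2 ⟨mem_en.2 ⟨hvb, u, hu, h⟩, hv⟩)

lemma ball_avoid {W A : Finset V} {j : ℕ} {v : V} (hv : v ∈ ball G W A j) : v ∈ A ∨ v ∉ W := by
  induction j with
  | zero => exact Or.inl hv
  | succ j ih =>
    rcases mem_union.1 hv with h | h
    · exact ih h
    · exact Or.inr (mem_sdiff.1 h).2

lemma ball_anti {W W' A : Finset V} (h : W ⊆ W') (j : ℕ) : ball G W' A j ⊆ ball G W A j := by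
  induction j with
  | zero => exact Subset.refl _
  | succ j ih =>
    intro v hv
    rcases mem_union.1 hv with hv | hv
    · exact ball_sub_succ _ _ _ (ih hv)
    · obtain ⟨h1, h2⟩ := mem_sdiff.1 hv
      obtain ⟨_, u, hu, huv⟩ := mem_en.1 h1
      exact ball_step (ih hu) huv (fun h' => h2 (h h'))

lemma ball_walk {W A : Finset V} (hA : ∀ a ∈ A, a ∉ W) {j : ℕ} : ∀ {v : V}, v ∈ ball G W A j →
    ∃ a ∈ A, ∃ p : G.Walk a v, p.length ≤ j ∧ ∀ x ∈ p.support, x ∉ W := by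
  induction j with
  | zero =>
    intro v hv
    exact ⟨v, hv, .nil, by simp, by simpa using hA v hv⟩
  | succ j ih =>
    intro v hv
    rcases mem_union.1 hv with hv | hv
    · obtain ⟨a, ha, p, hp, hpW⟩ := ih hv
      exact ⟨a, ha, p, by omega, hpW⟩
    · obtain ⟨h1, h2⟩ := mem_sdiff.1 hv
      obtain ⟨_, u, hu, huv⟩ := mem_en.1 h1
      obtain ⟨a, ha, p, hp, hpW⟩ := ih hu
      refine ⟨a, ha, p.concat huv, by simp; omega, ?_⟩
      intro x hx
      rw [SimpleGraph.Walk.support_concat] at hx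
      rcases List.mem_append.1 hx with hx | hx
      · exact hpW x hx
      · rw [List.mem_singleton] at hx
        rw [hx]; exact h2

lemma Setup.m1 (hS : Setup G d η m) : (1 : ℝ) ≤ m := by
  have := hS.hm
  exact_mod_cast (by omega : 1 ≤ m)

lemma Setup.m1000 (hS : Setup G d η m) : (1000 : ℝ) ≤ m := by exact_mod_cast hS.hm

lemma Setup.d0 (hS : Setup G d η m) : 0 < d :=
  lt_of_lt_of_le (by have := hS.m1; positivity) hS.hd

lemma Setup.η0 (hS : Setup G d η m) : 0 < η := by
  have := hS.hη; have h1 := hS.m1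
  by_contra h
  push Not at h
  nlinarith

lemma Setup.pw (hS : Setup G d η m) {a b : ℕ} (h : a ≤ b) : (m : ℝ) ^ a ≤ (m : ℝ) ^ b :=
  pow_le_pow_right₀ hS.m1 h

/-- `1000 * d * m^a ≤ d * m^(a+1)`. -/
lemma Setup.absorb (hS : Setup G d η m) {a b : ℕ} (h : a + 1 ≤ b) :
    1000 * (d * (m : ℝ) ^ a) ≤ d * (m : ℝ) ^ b := by
  have h1 := hS.pw h
  have h2 := hS.m1000
  have h3 := hS.d0
  have h4 : 1000 * (m : ℝ) ^ a ≤ (m : ℝ) ^ (a + 1) := by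
    rw [pow_succ]
    have : (0 : ℝ) < (m : ℝ) ^ a := by have := hS.m1; positivity
    nlinarith
  nlinarith

lemma Setup.pw_le_d (hS : Setup G d η m) {a : ℕ} (h : a ≤ 200) : (m : ℝ) ^ a ≤ d :=
  (hS.pw h).trans hS.hd

lemma Setup.grow (hS : Setup G d η m) (A W : Finset V) (hA : d ≤ (A.card : ℝ))
    (hW : (W.card : ℝ) * m ≤ 4 * A.card) :
    (Fintype.card V : ℝ) / 2 < ((ball G W A m).card : ℝ) := by
  by_contra hcon
  push Not at hcon
  have hη := hS.η0
  have hm := hS.m1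
  have hd := hS.d0
  have hWη : (W.card : ℝ) ≤ η / 2 * A.card := by
    have h1 := hS.hη
    have h2 : (W.card : ℝ) * m ≤ (η / 2 * A.card) * m := by
      have : (0 : ℝ) ≤ A.card := by positivity
      nlinarith
    exact le_of_mul_le_mul_right h2 (by linarith)
  have key : ∀ j, j ≤ m → (A.card : ℝ) * (1 + η / 2) ^ j ≤ ((ball G W A j).card : ℝ) := by
    intro j
    induction j with
    | zero => intro _; simp [ball]
    | succ j ih =>
      intro hj
      have ih := ih (by omega)
      set b := ball G W A j with hb
      have hAb : (A.card : ℝ) ≤ b.card := by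
        exact_mod_cast card_le_card (ball_mono_nat (G := G) W A (Nat.zero_le j))
      have hbn : (b.card : ℝ) ≤ (Fintype.card V : ℝ) / 2 := by
        refine le_trans ?_ hcon
        exact_mod_cast card_le_card (ball_mono_nat (G := G) W A (by omega : j ≤ m))
      have hex := hS.hexp b (hA.trans hAb) hbn
      have hdis : Disjoint b (en G b \ W) := by
        rw [disjoint_left]
        intro x hx hx'
        exact (mem_en.1 (mem_sdiff.1 hx').1).1 hx
      rw [ball_succ, card_union_of_disjoint hdis]
      have h3 : (en G b).card ≤ (en G b \ W).card + W.card := by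
        have := card_le_card_sdiff_add_card (t := W) (s := en G b)
        omega
      have h3' : ((en G b).card : ℝ) ≤ ((en G b \ W).card : ℝ) + W.card := by exact_mod_cast h3
      push_cast
      rw [pow_succ]
      nlinarith
  have h1 := key m le_rfl
  have h2 : (1 + η / 4) ^ (m - 1) ≤ (1 + η / 2) ^ m := by
    calc (1 + η / 4) ^ (m - 1) ≤ (1 + η / 4) ^ m := pow_le_pow_right₀ (by linarith) (by omega)
      _ ≤ _ := pow_le_pow_left₀ (by linarith) (by linarith) m
  have h3 := hS.hgrow
  have h4 : d * (1 + η / 4) ^ (m - 1) ≤ A.card * (1 + η / 2) ^ m :=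
    mul_le_mul hA h2 (by positivity) (by positivity)
  have h5 : (0 : ℝ) < Fintype.card V := lt_of_lt_of_le (by positivity) hS.hn
  linarith

lemma Setup.connect (hS : Setup G d η m) (A B W : Finset V) (hA : d ≤ (A.card : ℝ))
    (hB : d ≤ (B.card : ℝ)) (hWA : (W.card : ℝ) * m ≤ 4 * A.card)
    (hWB : (W.card : ℝ) * m ≤ 4 * B.card) (hAW : ∀ a ∈ A, a ∉ W) (hBW : ∀ a ∈ B, a ∉ W) :
    ∃ a ∈ A, ∃ b ∈ B, ∃ p : G.Walk a b, p.IsPath ∧ p.length ≤ 2 * m ∧ ∀ x ∈ p.support, x ∉ W := by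
  have h1 := hS.grow A W hA hWA
  have h2 := hS.grow B W hB hWB
  obtain ⟨x, hx1, hx2⟩ : ∃ x, x ∈ ball G W A m ∧ x ∈ ball G W B m := by
    by_contra hcon
    push Not at hcon
    have hdis : Disjoint (ball G W A m) (ball G W B m) := by
      rw [disjoint_left]; exact hcon
    have h3 := card_union_of_disjoint hdis
    have h4 := card_le_univ (ball G W A m ∪ ball G W B m)
    rw [h3] at h4
    have h5 : ((ball G W A m).card : ℝ) + (ball G W B m).card ≤ Fintype.card V := by exact_mod_cast h4
    linarith
  obtain ⟨a, ha, p, hp, hpW⟩ := ball_walk hAW hx1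
  obtain ⟨b, hb, q, hq, hqW⟩ := ball_walk hBW hx2
  refine ⟨a, ha, b, hb, (p.append q.reverse).bypass, SimpleGraph.Walk.bypass_isPath _, ?_, ?_⟩
  · refine (SimpleGraph.Walk.length_bypass_le_length _).trans ?_
    simp; omega
  · intro y hy
    have := SimpleGraph.Walk.support_bypass_subset_support _ hy
    rw [SimpleGraph.Walk.mem_support_append_iff, SimpleGraph.Walk.support_reverse,
      List.mem_reverse] at this
    rcases this with h | h
    · exact hpW y h
    · exact hqW y h

/-- A vertex robustly reaching many vertices. -/
def Good (G : SimpleGraph V) (d : ℝ) (m c : ℕ) (W : Finset V) (v : V) : Prop :=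
  v ∉ W ∧ ∀ S : Finset V, v ∉ S → S.card ≤ m ^ 5 →
    d * (m : ℝ) ^ (c + 2) ≤ ((ball G (W ∪ S) {v} m).card : ℝ)

set_option maxHeartbeats 1000000 in
lemma Setup.few_not_good (hS : Setup G d η m) (c : ℕ) (hc : c ≤ 100) (W : Finset V)
    (hW : (W.card : ℝ) ≤ d * (m : ℝ) ^ c) :
    ((univ.filter fun v => v ∉ W ∧ ¬ Good G d m c W v).card : ℝ) ≤ d * (m : ℝ) ^ (2 * c + 10) := by
  by_contra hcon
  push Not at hcon
  set B := univ.filter fun v => v ∉ W ∧ ¬ Good G d m c W v with hB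
  have hη := hS.η0
  have hm := hS.m1
  have hm' := hS.m1000
  have hd := hS.d0
  let Q : Finset V → Prop := fun X => Disjoint X W ∧ (X.card : ℝ) ≤ 2 * (d * (m : ℝ) ^ (c + 2)) ∧
    ∃ T : Finset V, (T.card : ℝ) * (d / 4) ≤ (m : ℝ) ^ 5 * X.card ∧
      ((en G X \ (W ∪ T)).card : ℝ) ≤ η / 4 * X.card
  have hQ0 : Q ∅ := by
    refine ⟨disjoint_empty_left _, by simp; positivity, ∅, by simp, ?_⟩
    have : en G (∅ : Finset V) = ∅ := by ext; simp [mem_en]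
    simp [this]
  obtain ⟨X, hXQ, hXmax⟩ := exists_max_image (univ.filter Q) Finset.card ⟨∅, by simpa using hQ0⟩
  have hXQ : Q X := (mem_filter.1 hXQ).2
  obtain ⟨hXW, hXc, T, hT, hen⟩ := hXQ
  have hdm : 0 < d * (m : ℝ) ^ c := by positivity
  by_cases hbig : d * (m : ℝ) ^ (c + 2) ≤ X.card
  · -- contradiction with expansion
    have h1 : d ≤ (X.card : ℝ) := by
      refine le_trans ?_ hbig
      have : (1 : ℝ) ≤ (m : ℝ) ^ (c + 2) := one_le_pow₀ hm
      nlinarith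
    have h2 : (X.card : ℝ) ≤ (Fintype.card V : ℝ) / 2 := by
      have := hS.absorb (a := c + 2) (b := 300) (by omega)
      have := hS.hn
      linarith
    have h3 := hS.hexp X h1 h2
    have h4 : (en G X).card ≤ (en G X \ (W ∪ T)).card + (W.card + T.card) := by
      have h5 := card_le_card_sdiff_add_card (t := W ∪ T) (s := en G X)
      have h6 := card_union_le W T
      omega
    have h4' : ((en G X).card : ℝ) ≤ ((en G X \ (W ∪ T)).card : ℝ) + (W.card + T.card) := by
      exact_mod_cast h4
    have hXpos : (0 : ℝ) < X.card := by linarith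
    -- bound W
    have h7 : (W.card : ℝ) < η / 4 * X.card := by
      have e1 : (W.card : ℝ) * m ^ 2 ≤ X.card := by
        calc (W.card : ℝ) * m ^ 2 ≤ d * (m : ℝ) ^ c * m ^ 2 :=
              mul_le_mul_of_nonneg_right hW (by positivity)
          _ = d * (m : ℝ) ^ (c + 2) := by ring
          _ ≤ _ := hbig
      have e2 : (W.card : ℝ) * m * m < (η / 4 * X.card) * m := by
        have := hS.hη
        nlinarith
      have e3 := lt_of_mul_lt_mul_right e2 (by linarith)
      have : (0 : ℝ) ≤ W.card := by positivity
      nlinarith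
    have h8 : (T.card : ℝ) < η / 4 * X.card := by
      have e0 : 4 * (m : ℝ) ^ 6 ≤ d := by
        have := hS.pw_le_d (a := 7) (by norm_num)
        have e : (m : ℝ) ^ 7 = (m : ℝ) ^ 6 * m := by ring
        have : (0 : ℝ) < (m : ℝ) ^ 6 := by positivity
        nlinarith
      have e1 : (T.card : ℝ) * m * (d / 4) ≤ X.card * (d / 4) := by
        calc (T.card : ℝ) * m * (d / 4) = (T.card * (d / 4)) * m := by ring
          _ ≤ ((m : ℝ) ^ 5 * X.card) * m := mul_le_mul_of_nonneg_right hT (by linarith)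
          _ = (m : ℝ) ^ 6 * X.card := by ring
          _ ≤ d / 4 * X.card := mul_le_mul_of_nonneg_right (by linarith) (by positivity)
          _ = _ := by ring
      have e2 : (T.card : ℝ) * m ≤ X.card := le_of_mul_le_mul_right e1 (by positivity)
      have e3 : (T.card : ℝ) * m < (η / 4 * X.card) * m := by
        have := hS.hη
        nlinarith
      exact lt_of_mul_lt_mul_right e3 (by linarith)
    have : 0 < η * X.card := by positivity
    linarith
  · push Not at hbig
    have hWX : ((W ∪ X).card : ℝ) ≤ d * (m : ℝ) ^ (c + 3) := by
      have h1 : ((W ∪ X).card : ℝ) ≤ W.card + X.card := by exact_mod_cast card_union_le W X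
      have h2 := hS.absorb (a := c) (b := c + 2) (by omega)
      have h3 := hS.absorb (a := c + 2) (b := c + 3) (by omega)
      linarith
    have hb := hS.hbad (c + 3) (W ∪ X) hWX
    set Y := univ.filter fun x => x ∉ W ∪ X ∧ d / 2 ≤ ((nb G x ∩ (W ∪ X)).card : ℝ) with hY
    obtain ⟨v, hvB, hvXY⟩ : ∃ v ∈ B, v ∉ X ∪ Y := by
      by_contra hno
      push Not at hno
      have h1 : (B.card : ℝ) ≤ ((X ∪ Y).card : ℝ) := by exact_mod_cast card_le_card hno
      have h2 : ((X ∪ Y).card : ℝ) ≤ X.card + Y.card := by exact_mod_cast card_union_le X Y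
      have h3 := hS.absorb (a := c + 2) (b := 2 * c + 10) (by omega)
      have h4 := hS.absorb (a := 2 * (c + 3) + 3) (b := 2 * c + 10) (by omega)
      have h5 : 0 < d * (m : ℝ) ^ (2 * c + 10) := by positivity
      linarith
    obtain ⟨hvX, hvY⟩ : v ∉ X ∧ v ∉ Y := by
      rw [mem_union] at hvXY
      push Not at hvXY
      exact hvXY
    obtain ⟨hvW, hvG⟩ := (mem_filter.1 hvB).2
    unfold Good at hvG
    push Not at hvG
    obtain ⟨S, hvS, hSc, hSb⟩ := hvG hvW
    have hvWX : v ∉ W ∪ X := by simp [hvW, hvX]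
    have hnbv : ((nb G v ∩ (W ∪ X)).card : ℝ) < d / 2 := by
      by_contra h
      push Not at h
      exact hvY (mem_filter.2 ⟨mem_univ _, hvWX, h⟩)
    set D := W ∪ S ∪ X with hD
    have hvD : v ∉ D := by simp [hD, hvW, hvS, hvX]
    let b : ℕ → Finset V := fun j => ball G D {v} j
    have hSd : (S.card : ℝ) ≤ d / 4 := by
      have e1 : (S.card : ℝ) ≤ (m : ℝ) ^ 5 := by exact_mod_cast hSc
      have := hS.pw_le_d (a := 6) (by norm_num)
      have e : (m : ℝ) ^ 6 = (m : ℝ) ^ 5 * m := by ring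
      have : (0 : ℝ) < (m : ℝ) ^ 5 := by positivity
      nlinarith
    have hb1 : d / 4 ≤ ((b 1).card : ℝ) := by
      have h1 : nb G v \ D ⊆ b 1 := by
        intro x hx
        obtain ⟨hx1, hx2⟩ := mem_sdiff.1 hx
        exact ball_step (j := 0) (u := v) (by simp [ball]) (mem_nb.1 hx1) hx2
      have h2 : nb G v ⊆ (nb G v \ D) ∪ (nb G v ∩ (W ∪ X)) ∪ S := by
        intro x hx
        simp only [hD, mem_union, mem_sdiff, mem_inter]
        tauto
      have h3 : (nb G v).card ≤ (nb G v \ D).card + (nb G v ∩ (W ∪ X)).card + S.card :=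
        (card_le_card h2).trans ((card_union_le _ _).trans (by
          have := card_union_le (nb G v \ D) (nb G v ∩ (W ∪ X))
          omega))
      have h3' : ((nb G v).card : ℝ) ≤ (nb G v \ D).card + (nb G v ∩ (W ∪ X)).card + S.card := by
        exact_mod_cast h3
      have h4 : ((nb G v \ D).card : ℝ) ≤ (b 1).card := by exact_mod_cast card_le_card h1
      have := hS.hdeg v
      linarith
    have hbm : ∀ j ≤ m, ((b j).card : ℝ) < d * (m : ℝ) ^ (c + 2) := by
      intro j hj
      refine lt_of_le_of_lt ?_ hSb
      have h1 : b j ⊆ ball G (W ∪ S) {v} m :=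
        (ball_mono_nat _ _ hj).trans (ball_anti subset_union_left m)
      exact_mod_cast card_le_card h1
    obtain ⟨j, hj1, hjm, hjle⟩ : ∃ j, 1 ≤ j ∧ j < m ∧
        ((b (j + 1)).card : ℝ) ≤ (1 + η / 4) * (b j).card := by
      by_contra hno
      push Not at hno
      have key : ∀ i, i + 1 ≤ m → (1 + η / 4) ^ i * (d / 4) ≤ ((b (i + 1)).card : ℝ) := by
        intro i
        induction i with
        | zero => intro _; simpa using hb1
        | succ i ih =>
          intro hi
          have h1 := ih (by omega)
          have h2 := hno (i + 1) (by omega) (by omega)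
          calc (1 + η / 4) ^ (i + 1) * (d / 4) = (1 + η / 4) * ((1 + η / 4) ^ i * (d / 4)) := by ring
            _ ≤ (1 + η / 4) * ((b (i + 1)).card : ℝ) := mul_le_mul_of_nonneg_left h1 (by linarith)
            _ ≤ _ := h2.le
      have hm1 : m - 1 + 1 = m := by have := hS.hm; omega
      have h1 := key (m - 1) (by omega)
      rw [hm1] at h1
      have h2 := hbm m le_rfl
      have h3 := hS.hgrow
      have h4 := hS.absorb (a := c + 2) (b := 300) (by omega)
      have h5 := hS.hn
      have h6 : 0 < d * (m : ℝ) ^ (c + 2) := by positivity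
      nlinarith
    have hbD : ∀ x ∈ b j, x ∉ D := by
      intro x hx
      rcases ball_avoid hx with h | h
      · rw [mem_singleton] at h
        rw [h]; exact hvD
      · exact h
    have hbX : Disjoint X (b j) := by
      rw [disjoint_left]
      intro x hx hx'
      exact hbD x hx' (by simp [hD, hx])
    have hXb : (X ∪ b j).card = X.card + (b j).card := card_union_of_disjoint hbX
    have hXb' : ((X ∪ b j).card : ℝ) = X.card + (b j).card := by exact_mod_cast hXb
    have hbj : d / 4 ≤ ((b j).card : ℝ) := hb1.trans (by
      exact_mod_cast card_le_card (ball_mono_nat (G := G) D {v} hj1))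
    have hQ' : Q (X ∪ b j) := by
      refine ⟨?_, ?_, T ∪ S, ?_, ?_⟩
      · rw [disjoint_union_left]
        refine ⟨hXW, ?_⟩
        rw [disjoint_left]
        intro x hx hx'
        exact hbD x hx (by simp [hD, hx'])
      · rw [hXb']
        have := hbm j hjm.le
        linarith
      · have h1 : ((T ∪ S).card : ℝ) ≤ T.card + S.card := by exact_mod_cast card_union_le T S
        have h2 : (S.card : ℝ) ≤ (m : ℝ) ^ 5 := by exact_mod_cast hSc
        rw [hXb']
        have h3 : (S.card : ℝ) * (d / 4) ≤ (m : ℝ) ^ 5 * (b j).card :=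
          mul_le_mul h2 hbj (by positivity) (by positivity)
        have h4 : ((T ∪ S).card : ℝ) * (d / 4) ≤ (T.card + S.card) * (d / 4) :=
          mul_le_mul_of_nonneg_right h1 (by positivity)
        rw [add_mul] at h4
        rw [mul_add]
        linarith
      · have h1 : en G (X ∪ b j) \ (W ∪ (T ∪ S)) ⊆ (en G X \ (W ∪ T)) ∪ (b (j + 1) \ b j) := by
          intro w hw
          obtain ⟨hw1, hw2⟩ := mem_sdiff.1 hw
          obtain ⟨hw3, u, hu, huw⟩ := mem_en.1 hw1
          simp only [mem_union] at hw2 hw3 hu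
          push Not at hw2 hw3
          rw [mem_union]
          rcases hu with hu | hu
          · left
            exact mem_sdiff.2 ⟨mem_en.2 ⟨hw3.1, u, hu, huw⟩, by
              simp [hw2.1, hw2.2.1]⟩
          · right
            exact mem_sdiff.2 ⟨ball_step hu huw (by simp [hD, hw2.1, hw2.2.2, hw3.1]), hw3.2⟩
        have h2 : (en G (X ∪ b j) \ (W ∪ (T ∪ S))).card ≤
            (en G X \ (W ∪ T)).card + (b (j + 1) \ b j).card :=
          (card_le_card h1).trans (card_union_le _ _)
        have h2' : ((en G (X ∪ b j) \ (W ∪ (T ∪ S))).card : ℝ) ≤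
            (en G X \ (W ∪ T)).card + (b (j + 1) \ b j).card := by exact_mod_cast h2
        have h3 : (b (j + 1) \ b j).card + (b j).card = (b (j + 1)).card :=
          card_sdiff_add_card_eq_card (ball_sub_succ _ _ _)
        have h3' : ((b (j + 1) \ b j).card : ℝ) + (b j).card = (b (j + 1)).card := by exact_mod_cast h3
        rw [hXb']
        linarith
    have h9 := hXmax (X ∪ b j) (mem_filter.2 ⟨mem_univ _, hQ'⟩)
    rw [hXb] at h9
    have : (0 : ℝ) < (b j).card := by linarith
    have : 0 < (b j).card := by exact_mod_cast this
    omega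

/-- Good vertices can be joined by short paths avoiding small sets. -/
lemma Setup.join (hS : Setup G d η m) (c : ℕ) (W : Finset V)
    (hW : (W.card : ℝ) ≤ d * (m : ℝ) ^ c) {u v : V} (hu : Good G d m c W u)
    (hv : Good G d m c W v) (S : Finset V) (huS : u ∉ S) (hvS : v ∉ S) (hSc : S.card ≤ m ^ 5) :
    ∃ p : G.Walk u v, p.IsPath ∧ p.length ≤ 4 * m ∧ ∀ x ∈ p.support, x ∉ W ∧ x ∉ S := by
  have hm := hS.m1
  have hd := hS.d0
  have hu' : ∀ a ∈ ({u} : Finset V), a ∉ W ∪ S := by simp [huS, hu.1]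
  have hv' : ∀ a ∈ ({v} : Finset V), a ∉ W ∪ S := by simp [hvS, hv.1]
  have hub := hu.2 S huS hSc
  have hvb := hv.2 S hvS hSc
  have hdd : d ≤ d * (m : ℝ) ^ (c + 2) := by
    have : (1 : ℝ) ≤ (m : ℝ) ^ (c + 2) := one_le_pow₀ hm
    nlinarith
  have hWS : ((W ∪ S).card : ℝ) * m ≤ d * (m : ℝ) ^ (c + 2) := by
    have h1 : ((W ∪ S).card : ℝ) ≤ W.card + S.card := by exact_mod_cast card_union_le W S
    have h2 : (S.card : ℝ) ≤ (m : ℝ) ^ 5 := by exact_mod_cast hSc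
    have h3 := hS.pw_le_d (a := 5) (by norm_num)
    have h4 : d ≤ d * (m : ℝ) ^ c := by
      have : (1 : ℝ) ≤ (m : ℝ) ^ c := one_le_pow₀ hm
      nlinarith
    have h5 := hS.absorb (a := c) (b := c + 1) le_rfl
    calc ((W ∪ S).card : ℝ) * m ≤ d * (m : ℝ) ^ (c + 1) * m := by
          apply mul_le_mul_of_nonneg_right _ (by linarith)
          have : 0 < d * (m : ℝ) ^ c := by positivity
          linarith
      _ = _ := by ring
  obtain ⟨a, ha, b, hb, p, hp, hpl, hpW⟩ := hS.connect (ball G (W ∪ S) {u} m)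
    (ball G (W ∪ S) {v} m) (W ∪ S) (hdd.trans hub) (hdd.trans hvb)
    (by
      have : (0 : ℝ) ≤ (ball G (W ∪ S) {u} m).card := by positivity
      linarith)
    (by
      have : (0 : ℝ) ≤ (ball G (W ∪ S) {v} m).card := by positivity
      linarith)
    (fun a ha => by
      rcases ball_avoid ha with h | h
      · exact hu' a h
      · exact h)
    (fun a ha => by
      rcases ball_avoid ha with h | h
      · exact hv' a h
      · exact h)
  obtain ⟨a', ha', q, hq, hqW⟩ := ball_walk hu' ha
  obtain ⟨b', hb', r, hr, hrW⟩ := ball_walk hv' hb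
  rw [mem_singleton] at ha' hb'
  subst ha' hb'
  refine ⟨(q.append (p.append r.reverse)).bypass, SimpleGraph.Walk.bypass_isPath _, ?_, ?_⟩
  · refine (SimpleGraph.Walk.length_bypass_le_length _).trans ?_
    simp; omega
  · intro y hy
    have h := SimpleGraph.Walk.support_bypass_subset_support _ hy
    rw [SimpleGraph.Walk.mem_support_append_iff, SimpleGraph.Walk.mem_support_append_iff,
      SimpleGraph.Walk.support_reverse, List.mem_reverse] at h
    have hfin : y ∉ W ∪ S := by
      rcases h with h | h | h
      · exact hqW y h
      · exact hpW y h
      · exact hrW y h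
    rw [mem_union] at hfin
    push Not at hfin
    exact hfin

/-- A bundle of paths with lengths `l, l+2, …, l+2k` inside `A`. -/
def MP (G : SimpleGraph V) (u w : V) (l k : ℕ) (A : Finset V) : Prop :=
  ∀ i ≤ k, ∃ p : G.Walk u w, p.IsPath ∧ p.length = l + 2 * i ∧ ∀ x ∈ p.support, x ∈ A

lemma append_isPath {u v w : V} {p : G.Walk u v} {q : G.Walk v w} (hp : p.IsPath) (hq : q.IsPath)
    (h : ∀ x ∈ p.support, x ∈ q.support → x = v) : (p.append q).IsPath := by
  rw [SimpleGraph.Walk.isPath_def, SimpleGraph.Walk.support_append, List.nodup_append]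
  have hq' := hq.support_nodup
  rw [← SimpleGraph.Walk.cons_tail_support, List.nodup_cons] at hq'
  refine ⟨hp.support_nodup, hq'.2, ?_⟩
  intro a ha b hb hab
  subst hab
  have h1 := h a ha (List.mem_of_mem_tail hb)
  subst h1
  exact hq'.1 hb

lemma MP.comp {u v w : V} {l k l' k' : ℕ} {A B : Finset V} (h1 : MP G u v l k A)
    (h2 : MP G v w l' k' B) (hAB : ∀ x ∈ A, x ∈ B → x = v) :
    MP G u w (l + l') (k + k') (A ∪ B) := by
  intro i hi
  obtain ⟨i1, i2, hi1, hi2, rfl⟩ : ∃ i1 i2, i1 ≤ k ∧ i2 ≤ k' ∧ i = i1 + i2 :=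
    ⟨min i k, i - min i k, by omega, by omega, by omega⟩
  obtain ⟨p, hp, hpl, hpA⟩ := h1 i1 hi1
  obtain ⟨q, hq, hql, hqB⟩ := h2 i2 hi2
  refine ⟨p.append q, append_isPath hp hq fun x hx hx' => hAB x (hpA x hx) (hqB x hx'), ?_, ?_⟩
  · rw [SimpleGraph.Walk.length_append]; omega
  · intro x hx
    rw [SimpleGraph.Walk.mem_support_append_iff] at hx
    rw [mem_union]
    rcases hx with hx | hx
    · exact Or.inl (hpA x hx)
    · exact Or.inr (hqB x hx)

lemma MP.of_path {u v : V} {p : G.Walk u v} (hp : p.IsPath) :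
    MP G u v p.length 0 p.support.toFinset := by
  intro i hi
  exact ⟨p, hp, by omega, fun x hx => List.mem_toFinset.2 hx⟩

lemma MP.left_mem {u v : V} {l k : ℕ} {A : Finset V} (h : MP G u v l k A) : u ∈ A := by
  obtain ⟨p, _, _, hA⟩ := h 0 (Nat.zero_le _)
  exact hA _ p.start_mem_support

lemma MP.right_mem {u v : V} {l k : ℕ} {A : Finset V} (h : MP G u v l k A) : v ∈ A := by
  obtain ⟨p, _, _, hA⟩ := h 0 (Nat.zero_le _)
  exact hA _ p.end_mem_support

lemma supp_card_le {u v : V} (p : G.Walk u v) : p.support.toFinset.card ≤ p.length + 1 := by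
  have := List.toFinset_card_le p.support
  rwa [SimpleGraph.Walk.length_support] at this

lemma split_path {u v : V} (p : G.Walk u v) (hp : p.IsPath) (j : ℕ) (hj : j ≤ p.length) :
    ∃ (b : V) (q1 : G.Walk u b) (q2 : G.Walk b v), q1.IsPath ∧ q2.IsPath ∧ q1.length = j ∧
      q2.length = p.length - j ∧ (∀ x ∈ q1.support, x ∈ p.support) ∧
      (∀ x ∈ q2.support, x ∈ p.support) ∧ ∀ x ∈ q1.support, x ∈ q2.support → x = b := by
  induction p generalizing j with
  | nil =>
    refine ⟨_, .nil, .nil, by simp, by simp, ?_, by simp, by simp, by simp, by simp⟩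
    simp at hj; simp [hj]
  | @cons a c e h p ih =>
    cases j with
    | zero =>
      refine ⟨a, .nil, .cons h p, by simp, hp, by simp, by simp, by simp, by simp, by simp⟩
    | succ j =>
      rw [SimpleGraph.Walk.cons_isPath_iff] at hp
      obtain ⟨b, q1, q2, h1, h2, h3, h4, h5, h6, h7⟩ := ih hp.1 j (by simpa using hj)
      refine ⟨b, .cons h q1, q2, ?_, h2, by simp [h3], by simp [h4], ?_, ?_, ?_⟩
      · rw [SimpleGraph.Walk.cons_isPath_iff]
        exact ⟨h1, fun hx => hp.2 (h5 _ hx)⟩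
      · intro x hx
        rw [SimpleGraph.Walk.support_cons, List.mem_cons] at hx ⊢
        rcases hx with hx | hx
        · exact Or.inl hx
        · exact Or.inr (h5 x hx)
      · intro x hx
        rw [SimpleGraph.Walk.support_cons, List.mem_cons]
        exact Or.inr (h6 x hx)
      · intro x hx hx'
        rw [SimpleGraph.Walk.support_cons, List.mem_cons] at hx
        rcases hx with hx | hx
        · rw [hx] at hx'
          exact absurd (h6 _ hx') hp.2
        · exact h7 x hx hx'

lemma walk_parity {A : Set V} (hA : IsBipartiteWith G A) {u v : V} (p : G.Walk u v) :
    Even p.length ↔ (u ∈ A ↔ v ∈ A) := by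
  induction p with
  | nil => simp
  | cons h p ih =>
    rw [SimpleGraph.Walk.length_cons, Nat.even_add_one, ih]
    have := hA h
    tauto

/-- Two internally disjoint paths give a pair of vertices joined by paths of lengths
differing by two. -/
lemma gadget_of_paths {u v : V} (p q : G.Walk u v) (hp : p.IsPath) (hq : q.IsPath)
    (hpq : p.length ≤ q.length) (h2 : 2 ≤ p.length) (hpar : Even (p.length + q.length))
    (hdis : ∀ x ∈ p.support, x ∈ q.support → x = u ∨ x = v) :
    ∃ b l, l ≤ q.length ∧ MP G u b l 1 (p.support.toFinset ∪ q.support.toFinset) := by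
  obtain ⟨k, hk⟩ := hpar
  obtain ⟨b, q1, q2, h1, h3, h4, h5, h6, h7, h8⟩ := split_path q hq (k - 1) (by omega)
  refine ⟨b, k - 1, by omega, ?_⟩
  have hub : u ≠ b := by
    rintro rfl
    have := SimpleGraph.Walk.nil_iff_length_eq.1 (SimpleGraph.Walk.isPath_iff_nil.1 h1)
    omega
  intro i hi
  interval_cases i
  · refine ⟨q1, h1, by omega, fun x hx => ?_⟩
    rw [mem_union, List.mem_toFinset, List.mem_toFinset]
    exact Or.inr (h6 x hx)
  · refine ⟨p.append q2.reverse, append_isPath hp ((SimpleGraph.Walk.isPath_reverse_iff _).2 h3) ?_, ?_, ?_⟩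
    · intro x hx hx'
      rw [SimpleGraph.Walk.support_reverse, List.mem_reverse] at hx'
      rcases hdis x hx (h7 x hx') with h | h
      · subst h
        exact absurd (h8 _ q1.start_mem_support hx') hub
      · exact h
    · rw [SimpleGraph.Walk.length_append, SimpleGraph.Walk.length_reverse]
      omega
    · intro x hx
      rw [SimpleGraph.Walk.mem_support_append_iff, SimpleGraph.Walk.support_reverse,
        List.mem_reverse] at hx
      rw [mem_union, List.mem_toFinset, List.mem_toFinset]
      rcases hx with hx | hx
      · exact Or.inl hx
      · exact Or.inr (h7 x hx)

lemma Setup.exists_good (hS : Setup G d η m) (c : ℕ) (hc : c ≤ 100) (W : Finset V)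
    (hW : (W.card : ℝ) ≤ d * (m : ℝ) ^ c) (S : Finset V) (hSc : (S.card : ℝ) ≤ d) :
    ∃ v, Good G d m c W v ∧ v ∉ S := by
  by_contra hcon
  push Not at hcon
  have hb := hS.few_not_good c hc W hW
  set B := univ.filter fun v => v ∉ W ∧ ¬ Good G d m c W v with hB
  have h1 : (univ : Finset V) ⊆ W ∪ B ∪ S := by
    intro v _
    simp only [mem_union]
    by_cases hg : Good G d m c W v
    · exact Or.inr (hcon v hg)
    · by_cases hw : v ∈ W
      · exact Or.inl (Or.inl hw)
      · exact Or.inl (Or.inr (mem_filter.2 ⟨mem_univ _, hw, hg⟩))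
  have h2 : Fintype.card V ≤ W.card + B.card + S.card := by
    have e1 := card_le_card h1
    have e2 := card_union_le (W ∪ B) S
    have e3 := card_union_le W B
    rw [card_univ] at e1
    omega
  have h2' : (Fintype.card V : ℝ) ≤ W.card + B.card + S.card := by exact_mod_cast h2
  have h3 := hS.absorb (a := c) (b := 300) (by omega)
  have h4 := hS.absorb (a := 2 * c + 10) (b := 300) (by omega)
  have h5 := hS.absorb (a := 0) (b := 300) (by omega)
  have h6 := hS.hn
  have h7 : 0 < d * (m : ℝ) ^ 300 := by have := hS.m1; have := hS.d0; positivity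
  simp only [pow_zero, mul_one] at h5
  linarith

lemma Setup.natcard_le_d (hS : Setup G d η m) {k : ℕ} (h : k ≤ m ^ 200) : (k : ℝ) ≤ d :=
  le_trans (by exact_mod_cast h) hS.hd

lemma Setup.gadget (hS : Setup G d η m) (c : ℕ) (hc : c ≤ 100) (W : Finset V)
    (hW : (W.card : ℝ) ≤ d * (m : ℝ) ^ c) (S : Finset V) (hSc : S.card ≤ m ^ 4) :
    ∃ a b l A, MP G a b l 1 A ∧ A.card ≤ 9 * m ∧ l ≤ 4 * m ∧ ∀ x ∈ A, x ∉ W ∧ x ∉ S := by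
  have hm := hS.hm
  have h45 : m ^ 4 * 1000 ≤ m ^ 5 := by
    rw [pow_succ m 4]; exact Nat.mul_le_mul_left _ hm
  have h14 : m ≤ m ^ 4 := Nat.le_self_pow (by norm_num) m
  have h5200 : m ^ 5 ≤ m ^ 200 := Nat.pow_le_pow_right (by omega) (by norm_num)
  obtain ⟨X, hX⟩ := hS.hbip
  obtain ⟨v1, hg1, hv1⟩ := hS.exists_good c hc W hW S (hS.natcard_le_d (by omega))
  have hi1 := card_insert_le v1 S
  obtain ⟨v2, hg2, hv2⟩ := hS.exists_good c hc W hW (insert v1 S) (hS.natcard_le_d (by omega))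
  have hi2 := card_insert_le v2 (insert v1 S)
  obtain ⟨v3, hg3, hv3⟩ := hS.exists_good c hc W hW (insert v2 (insert v1 S))
    (hS.natcard_le_d (by omega))
  simp only [mem_insert, not_or] at hv2 hv3
  obtain ⟨u, v, hgu, hgv, huS, hvS, huv, hside⟩ : ∃ u v, Good G d m c W u ∧ Good G d m c W v ∧
      u ∉ S ∧ v ∉ S ∧ u ≠ v ∧ (u ∈ X ↔ v ∈ X) := by
    by_cases h12 : v1 ∈ X ↔ v2 ∈ X
    · exact ⟨v1, v2, hg1, hg2, hv1, hv2.2, fun h => hv2.1 h.symm, h12⟩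
    · by_cases h13 : v1 ∈ X ↔ v3 ∈ X
      · exact ⟨v1, v3, hg1, hg3, hv1, hv3.2.2, fun h => hv3.2.1 h.symm, h13⟩
      · exact ⟨v2, v3, hg2, hg3, hv2.2, hv3.2.2, fun h => hv3.1 h.symm, by tauto⟩
  have hlen : ∀ p : G.Walk u v, 2 ≤ p.length := by
    intro p
    have h1 : Even p.length := (walk_parity hX p).2 hside
    have h2 : p.length ≠ 0 := fun h => huv (SimpleGraph.Walk.eq_of_length_eq_zero h)
    obtain ⟨r, hr⟩ := h1
    omega
  obtain ⟨p, hp, hpl, hpW⟩ := hS.join c W hW hgu hgv S huS hvS (by omega)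
  set I := (p.support.toFinset.erase u).erase v with hI
  have hIc : I.card ≤ 4 * m + 1 := by
    have h1 := supp_card_le p
    have h2 : I.card ≤ p.support.toFinset.card :=
      card_le_card ((erase_subset _ _).trans (erase_subset _ _))
    omega
  obtain ⟨q, hq, hql, hqW⟩ := hS.join c W hW hgu hgv (S ∪ I) (by simp [hI, huS]) (by simp [hI, hvS])
    (by have := card_union_le S I; omega)
  have hdis : ∀ x ∈ p.support, x ∈ q.support → x = u ∨ x = v := by
    intro x hx hx'
    have h1 := (hqW x hx').2
    simp only [hI, mem_union, mem_erase, List.mem_toFinset] at h1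
    tauto
  have hev : Even (p.length + q.length) :=
    ((walk_parity hX p).2 hside).add ((walk_parity hX q).2 hside)
  have hpc := supp_card_le p
  have hqc := supp_card_le q
  have hpS : ∀ x ∈ p.support.toFinset ∪ q.support.toFinset, x ∉ W ∧ x ∉ S := by
    intro x hx
    rw [mem_union, List.mem_toFinset, List.mem_toFinset] at hx
    rcases hx with hx | hx
    · exact hpW x hx
    · have := hqW x hx
      simp only [mem_union, not_or] at this
      exact ⟨this.1, this.2.1⟩
  have hcard := card_union_le p.support.toFinset q.support.toFinset
  rcases le_total p.length q.length with h | h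
  · obtain ⟨b, l, hl, hM⟩ := gadget_of_paths p q hp hq h (hlen p) hev hdis
    exact ⟨u, b, l, _, hM, by omega, by omega, hpS⟩
  · obtain ⟨b, l, hl, hM⟩ := gadget_of_paths q p hq hp h (hlen q) (by rwa [add_comm])
      (fun x hx hx' => hdis x hx' hx)
    rw [union_comm] at hM
    exact ⟨u, b, l, _, hM, by omega, by omega, hpS⟩

/-- Joining the end of a bundle to a good vertex. -/
lemma Setup.extend (hS : Setup G d η m) (W : Finset V)
    (hW : (W.card : ℝ) ≤ d * (m : ℝ) ^ 10) {v w a : V} {l k : ℕ} {A : Finset V}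
    (hM : MP G v w l k A) (hw : Good G d m 10 W w) (ha : Good G d m 10 W a) (haA : a ∉ A)
    (hAW : ∀ x ∈ A, x ∉ W) (S : Finset V) (hwS : w ∉ S) (haS : a ∉ S)
    (hc : A.card + S.card ≤ m ^ 5) :
    ∃ l' A', MP G v a l' k A' ∧ l + 1 ≤ l' ∧ l' ≤ l + 4 * m ∧ A ⊆ A' ∧
      A'.card + l ≤ A.card + l' ∧ (∀ x ∈ A', x ∉ W) ∧ ∀ x ∈ A', x ∈ A ∨ x ∉ S := by
  have hwA := hM.right_mem
  have hwa : w ≠ a := fun h => haA (h ▸ hwA)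
  obtain ⟨p, hp, hpl, hpW⟩ := hS.join 10 W hW hw ha (A.erase w ∪ S)
    (by simp [hwS]) (by simp [haA, haS]) (by
      have h1 := card_union_le (A.erase w) S
      have h2 := card_le_card (erase_subset w A)
      omega)
  have hmeet : ∀ x ∈ A, x ∈ p.support.toFinset → x = w := by
    intro x hx hx'
    have h1 := (hpW x (List.mem_toFinset.1 hx')).2
    simp only [mem_union, mem_erase, not_or] at h1
    by_contra h
    exact h1.1 ⟨h, hx⟩
  have hM2 := hM.comp (MP.of_path hp) hmeet
  have h0 : p.length ≠ 0 := fun h => hwa (SimpleGraph.Walk.eq_of_length_eq_zero h)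
  refine ⟨l + p.length, _, hM2, by omega, by omega, subset_union_left, ?_, ?_, ?_⟩
  · have h1 : (A ∪ p.support.toFinset) = A ∪ p.support.toFinset.erase w := by
      ext x
      simp only [mem_union, mem_erase]
      by_cases hx : x = w
      · subst hx; simp [hwA]
      · simp [hx]
    have h2 := card_union_le A (p.support.toFinset.erase w)
    have h3 := supp_card_le p
    have h4 : (p.support.toFinset.erase w).card = p.support.toFinset.card - 1 :=
      card_erase_of_mem (List.mem_toFinset.2 p.start_mem_support)
    rw [h1]
    omega
  · intro x hx
    rcases mem_union.1 hx with hx | hx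
    · exact hAW x hx
    · exact (hpW x (List.mem_toFinset.1 hx)).1
  · intro x hx
    rcases mem_union.1 hx with hx | hx
    · exact Or.inl hx
    · right
      have := (hpW x (List.mem_toFinset.1 hx)).2
      simp only [mem_union, not_or] at this
      exact this.2

set_option maxHeartbeats 1000000 in
/-- The whole chain. -/
lemma Setup.chain (hS : Setup G d η m) (W : Finset V)
    (hW : (W.card : ℝ) ≤ d * (m : ℝ) ^ 10) {v1 v2 : V} (h1 : Good G d m 10 W v1)
    (h2 : Good G d m 10 W v2) (h12 : v1 ≠ v2) :
    ∃ l A, MP G v1 v2 l (m ^ 2) A ∧ 80 * m ^ 3 ≤ l + 2 * m ^ 2 ∧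
      l + 2 * m ^ 2 ≤ 80 * m ^ 3 + 80 * m ∧ A.card ≤ 200 * m ^ 3 ∧ ∀ x ∈ A, x ∉ W := by
  have hm := hS.hm
  have e2 : 1000 * m ≤ m ^ 2 := by rw [sq]; exact Nat.mul_le_mul_right _ hm
  have e3 : 1000 * m ^ 2 ≤ m ^ 3 := by rw [pow_succ m 2, mul_comm]; exact Nat.mul_le_mul_left _ hm
  have e4 : 1000 * m ^ 3 ≤ m ^ 4 := by rw [pow_succ m 3, mul_comm]; exact Nat.mul_le_mul_left _ hm
  have e5 : 1000 * m ^ 4 ≤ m ^ 5 := by rw [pow_succ m 4, mul_comm]; exact Nat.mul_le_mul_left _ hm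
  have h5200 : m ^ 5 ≤ m ^ 200 := Nat.pow_le_pow_right (by omega) (by norm_num)
  have hb := hS.few_not_good 10 (by norm_num) W hW
  set B := univ.filter fun v => v ∉ W ∧ ¬ Good G d m 10 W v with hB
  have hW1 : ((W ∪ B).card : ℝ) ≤ d * (m : ℝ) ^ 31 := by
    have i1 : ((W ∪ B).card : ℝ) ≤ W.card + B.card := by exact_mod_cast card_union_le W B
    have i2 := hS.absorb (a := 10) (b := 31) (by norm_num)
    have i3 := hS.absorb (a := 2 * 10 + 10) (b := 31) (by norm_num)
    have : 0 < d * (m : ℝ) ^ 31 := by have := hS.m1; have := hS.d0; positivity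
    linarith
  have hgood : ∀ x, x ∉ W ∪ B → Good G d m 10 W x := by
    intro x hx
    by_contra hg
    simp only [hB, mem_union, mem_filter, mem_univ, true_and, not_or] at hx
    exact hx.2 ⟨hx.1, hg⟩
  have phase1 : ∀ t ≤ m ^ 2, ∃ w l A, MP G v1 w l t A ∧ Good G d m 10 W w ∧
      A.card ≤ 20 * (m * t) + 1 ∧ l ≤ 8 * (m * t) ∧ (∀ x ∈ A, x ∉ W) ∧ v2 ∉ A := by
    intro t
    induction t with
    | zero =>
      intro _
      refine ⟨v1, 0, {v1}, ?_, h1, by simp, by simp, by simpa using h1.1, by simpa using h12.symm⟩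
      intro i hi
      exact ⟨.nil, by simp, by simp; omega, by simp⟩
    | succ t ih =>
      intro ht
      obtain ⟨w, l, A, hM, hw, hAc, hl, hAW, hv2A⟩ := ih (by omega)
      have hmt : m * t ≤ m ^ 3 := by
        calc m * t ≤ m * m ^ 2 := Nat.mul_le_mul_left _ (by omega)
          _ = m ^ 3 := by ring
      have hi := card_insert_le v2 A
      obtain ⟨a, b, l', A', hM', hA'c, hl', hA'⟩ := hS.gadget 31 (by norm_num) (W ∪ B) hW1
        (insert v2 A) (by omega)
      have haA' := hM'.left_mem
      have hwA := hM.right_mem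
      have hA'A : ∀ x ∈ A', x ∉ A := fun x hx hx' => (hA' x hx).2 (mem_insert_of_mem hx')
      have hA'v : v2 ∉ A' := fun hx => (hA' _ hx).2 (mem_insert_self _ _)
      obtain ⟨l2, A2, hM2, hl21, hl22, hsub, hA2c, hA2W, hA2S⟩ := hS.extend W hW hM hw
        (hgood a (hA' a haA').1) (hA'A a haA') hAW (insert v2 (A'.erase a))
        (by
          simp only [mem_insert, mem_erase, not_or]
          exact ⟨fun h => hv2A (h ▸ hwA), fun h => hA'A w h.2 hwA⟩)
        (by
          simp only [mem_insert, mem_erase, not_or]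
          exact ⟨fun h => hA'v (h ▸ haA'), fun h => h.1 rfl⟩)
        (by
          have i1 := card_insert_le v2 (A'.erase a)
          have i2 := card_le_card (erase_subset a A')
          omega)
      have hmeet : ∀ x ∈ A2, x ∈ A' → x = a := by
        intro x hx hx'
        rcases hA2S x hx with h | h
        · exact absurd h (hA'A x hx')
        · simp only [mem_insert, mem_erase, not_or] at h
          by_contra hxa
          exact h.2 ⟨hxa, hx'⟩
      refine ⟨b, l2 + l', A2 ∪ A', hM2.comp hM' hmeet, hgood b (hA' b hM'.right_mem).1, ?_, ?_, ?_, ?_⟩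
      · have := card_union_le A2 A'
        have i3 : m * (t + 1) = m * t + m := by ring
        omega
      · have i3 : m * (t + 1) = m * t + m := by ring
        omega
      · intro x hx
        rcases mem_union.1 hx with hx | hx
        · exact hA2W x hx
        · have := (hA' x hx).1
          simp only [mem_union, not_or] at this
          exact this.1
      · intro hx
        rcases mem_union.1 hx with hx | hx
        · rcases hA2S _ hx with h | h
          · exact hv2A h
          · exact h (mem_insert_self _ _)
        · exact hA'v hx
  obtain ⟨w0, l0, A0, hM0, hw0, hA0c, hl0, hA0W, hv2A0⟩ := phase1 (m ^ 2) le_rfl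
  have hm3 : m * m ^ 2 = m ^ 3 := by ring
  rw [hm3] at hA0c hl0
  have phase2 : ∀ s, l0 + s ≤ 80 * m ^ 3 → ∃ w l A, MP G v1 w l (m ^ 2) A ∧ Good G d m 10 W w ∧
      A.card ≤ l + 20 * m ^ 3 + 1 ∧ l0 + s ≤ l ∧ l ≤ l0 + s + 4 * m ∧ (∀ x ∈ A, x ∉ W) ∧
      v2 ∉ A := by
    intro s
    induction s with
    | zero =>
      intro _
      exact ⟨w0, l0, A0, hM0, hw0, by omega, by omega, by omega, hA0W, hv2A0⟩
    | succ s ih =>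
      intro hs
      obtain ⟨w, l, A, hM, hw, hAc, hl1, hl2, hAW, hv2A⟩ := ih (by omega)
      by_cases hls : l0 + (s + 1) ≤ l
      · exact ⟨w, l, A, hM, hw, hAc, hls, by omega, hAW, hv2A⟩
      · have hi := card_insert_le v2 A
        obtain ⟨a, hga, haA⟩ := hS.exists_good 10 (by norm_num) W hW (insert v2 A)
          (hS.natcard_le_d (by omega))
        simp only [mem_insert, not_or] at haA
        obtain ⟨l2, A2, hM2, hl21, hl22, hsub, hA2c, hA2W, hA2S⟩ := hS.extend W hW hM hw
          hga haA.2 hAW {v2}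
          (by
            rw [mem_singleton]
            exact fun h => hv2A (h ▸ hM.right_mem))
          (by
            rw [mem_singleton]
            exact haA.1)
          (by rw [card_singleton]; omega)
        refine ⟨a, l2, A2, hM2, hga, by omega, by omega, by omega, hA2W, ?_⟩
        intro hx
        rcases hA2S _ hx with h | h
        · exact hv2A h
        · exact h (mem_singleton_self _)
  obtain ⟨w, l, A, hM, hw, hAc, hl1, hl2, hAW, hv2A⟩ := phase2 (80 * m ^ 3 - 2 * m ^ 2 - l0) (by omega)
  obtain ⟨l2, A2, hM2, hl21, hl22, hsub, hA2c, hA2W, hA2S⟩ := hS.extend W hW hM hw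
    h2 hv2A hAW ∅ (notMem_empty _) (notMem_empty _) (by rw [card_empty]; omega)
  exact ⟨l2, A2, hM2, by omega, by omega, by omega, hA2W⟩
/-- A family of disjoint stars avoiding a set. -/
def Stars (G : SimpleGraph V) (W I : Finset V) (Λ : V → Finset V) (q : ℕ) : Prop :=
  (∀ u ∈ I, u ∉ W ∧ (Λ u).card = q ∧ ∀ x ∈ Λ u, G.Adj u x ∧ x ∉ W ∧ x ∉ I) ∧
  ∀ u ∈ I, ∀ w ∈ I, u ≠ w → Disjoint (Λ u) (Λ w)

lemma Setup.stars (hS : Setup G d η m) (W : Finset V) (q : ℕ) (hq : (q : ℝ) ≤ d / 2) (N : ℕ)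
    (h : (W.card : ℝ) + N * (q + 1) ≤ d * (m : ℝ) ^ 80) :
    ∃ I Λ, I.card = N ∧ Stars G W I Λ q := by
  induction N with
  | zero => exact ⟨∅, fun _ => ∅, rfl, by simp, by simp⟩
  | succ N ih =>
    obtain ⟨I, Λ, hI, hst, hdis⟩ := ih (by
      push_cast at h
      have : (0 : ℝ) ≤ q := by positivity
      linarith)
    set U := W ∪ I ∪ I.biUnion Λ with hU
    have hUc : (U.card : ℝ) ≤ d * (m : ℝ) ^ 80 := by
      have h1 : (I.biUnion Λ).card ≤ N * q := by
        rw [← hI]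
        exact card_biUnion_le_card_mul _ _ _ fun u hu => (hst u hu).2.1.le
      have h2 : U.card ≤ W.card + N + N * q :=
        (card_union_le _ _).trans (by have := card_union_le W I; omega)
      have h3 : (U.card : ℝ) ≤ W.card + N + N * q := by exact_mod_cast h2
      push_cast at h
      have : (0 : ℝ) ≤ q := by positivity
      linarith
    have hb := hS.hbad 80 U hUc
    set Bd := univ.filter fun x => x ∉ U ∧ d / 2 ≤ ((nb G x ∩ U).card : ℝ) with hBd
    obtain ⟨x, hx⟩ : ∃ x, x ∉ U ∪ Bd := by
      by_contra hcon
      push Not at hcon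
      have h1 : U ∪ Bd = univ := by ext y; simp [hcon y]
      have h2 : (Fintype.card V : ℝ) ≤ U.card + Bd.card := by
        rw [← Finset.card_univ, ← h1]; exact_mod_cast card_union_le _ _
      have h3 := hS.hn
      have h4 := hS.absorb (show 80 + 1 ≤ 300 by norm_num)
      have h5 := hS.absorb (show 2 * 80 + 3 + 1 ≤ 300 by norm_num)
      have h6 : 0 < d * (m : ℝ) ^ 300 := by have := hS.m1; have := hS.d0; positivity
      linarith
    rw [mem_union, not_or] at hx
    obtain ⟨hxU, hxB⟩ := hx
    have hlt : ((nb G x ∩ U).card : ℝ) < d / 2 := by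
      by_contra hc
      push Not at hc
      exact hxB (by simp [hBd, hxU, hc])
    have hge : q ≤ (nb G x \ U).card := by
      have h1 : (nb G x \ U).card + (nb G x ∩ U).card = (nb G x).card :=
        card_sdiff_add_card_inter _ _
      have h2 := hS.hdeg x
      have h3 : ((nb G x \ U).card : ℝ) + (nb G x ∩ U).card = (nb G x).card := by exact_mod_cast h1
      have : (q : ℝ) ≤ (nb G x \ U).card := by linarith
      exact_mod_cast this
    obtain ⟨T, hT, hTc⟩ := exists_subset_card_eq hge
    have hTm : ∀ y ∈ T, G.Adj x y ∧ y ∉ U := fun y hy => by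
      have := mem_sdiff.1 (hT hy)
      exact ⟨mem_nb.1 this.1, this.2⟩
    have hxI : x ∉ I := fun h' => hxU (by simp [hU, h'])
    have hxW : x ∉ W := fun h' => hxU (by simp [hU, h'])
    have hxΛ : ∀ u ∈ I, x ∉ Λ u := fun u hu h' => hxU (by
      rw [hU]; exact mem_union_right _ (mem_biUnion.2 ⟨u, hu, h'⟩))
    have hne : ∀ u ∈ I, u ≠ x := fun u hu h' => hxI (h' ▸ hu)
    refine ⟨insert x I, Function.update Λ x T, by rw [card_insert_of_notMem hxI, hI], ?_, ?_⟩
    · intro u hu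
      rcases mem_insert.1 hu with rfl | hu2
      · refine ⟨hxW, by simp [hTc], fun y hy => ?_⟩
        rw [Function.update_self] at hy
        obtain ⟨h1, h2⟩ := hTm y hy
        refine ⟨h1, fun h' => h2 (by simp [hU, h']), fun h' => ?_⟩
        rcases mem_insert.1 h' with rfl | h'
        · exact G.loopless.irrefl _ h1
        · exact h2 (by simp [hU, h'])
      · obtain ⟨h1, h2, h3⟩ := hst u hu2
        rw [Function.update_of_ne (hne u hu2)]
        refine ⟨h1, h2, fun y hy => ⟨(h3 y hy).1, (h3 y hy).2.1, fun h' => ?_⟩⟩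
        rcases mem_insert.1 h' with rfl | h'
        · exact hxΛ u hu2 hy
        · exact (h3 y hy).2.2 h'
    · have key : ∀ w ∈ I, Disjoint T (Λ w) := fun w hw => by
        rw [disjoint_left]
        intro y hy hy'
        exact (hTm y hy).2 (by rw [hU]; exact mem_union_right _ (mem_biUnion.2 ⟨w, hw, hy'⟩))
      intro u hu w hw huw
      rcases mem_insert.1 hu with rfl | hu2 <;> rcases mem_insert.1 hw with rfl | hw2
      · exact absurd rfl huw
      · rw [Function.update_self, Function.update_of_ne (hne w hw2)]; exact key w hw2
      · rw [Function.update_self, Function.update_of_ne (hne u hu2)]; exact (key u hu2).symm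
      · rw [Function.update_of_ne (hne w hw2), Function.update_of_ne (hne u hu2)]
        exact hdis u hu2 w hw2 huw

/-- A family of paths from `z`, one to each vertex of `J`, pairwise meeting only at `z`. -/
def Fam (G : SimpleGraph V) (W I : Finset V) (L : ℕ) (z : V) (J : Finset V) (S : V → Finset V) :
    Prop :=
  ∀ u ∈ J, (∃ p : G.Walk z u, p.IsPath ∧ 0 < p.length ∧ p.length ≤ L ∧
      p.support.toFinset = S u) ∧
    (∀ x ∈ S u, x ∉ W ∧ (x ∈ I → x = z ∨ x = u)) ∧
    ∀ w ∈ J, u ≠ w → ∀ x ∈ S u, x ∈ S w → x = z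

lemma Fam.mem {W I : Finset V} {L : ℕ} {z : V} {J : Finset V} {S : V → Finset V}
    (h : Fam G W I L z J S) {u : V} (hu : u ∈ J) : u ∈ S u ∧ z ∈ S u := by
  obtain ⟨⟨p, _, _, _, hp⟩, _⟩ := h u hu
  rw [← hp]; simp

lemma Fam.card_le {W I : Finset V} {L : ℕ} {z : V} {J : Finset V} {S : V → Finset V}
    (h : Fam G W I L z J S) {u : V} (hu : u ∈ J) : (S u).card ≤ L + 1 := by
  obtain ⟨⟨p, _, _, hl, hp⟩, _⟩ := h u hu
  rw [← hp]
  exact (supp_card_le p).trans (by omega)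

lemma Fam.insert {W I : Finset V} {L : ℕ} {z : V} {J : Finset V} {S : V → Finset V}
    (h : Fam G W I L z J S) {u : V} (hu : u ∉ J) (p : G.Walk z u) (hp : p.IsPath)
    (h0 : 0 < p.length) (hL : p.length ≤ L)
    (hx : ∀ x ∈ p.support, x ∉ W ∧ (x ∈ I → x = z ∨ x = u))
    (hd : ∀ w ∈ J, ∀ x ∈ p.support, x ∈ S w → x = z) :
    Fam G W I L z (insert u J) (Function.update S u p.support.toFinset) := by
  have hne : ∀ w ∈ J, w ≠ u := fun w hw h' => hu (h' ▸ hw)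
  intro a ha
  rcases mem_insert.1 ha with rfl | ha2
  · rw [Function.update_self]
    refine ⟨⟨p, hp, h0, hL, rfl⟩, fun x hx' => hx x (by simpa using hx'), ?_⟩
    intro w hw haw x hxa hxw
    rw [Function.update_of_ne haw.symm] at hxw
    exact hd w ((mem_insert.1 hw).resolve_left haw.symm) x (by simpa using hxa) hxw
  · rw [Function.update_of_ne (hne a ha2)]
    obtain ⟨h1, h2, h3⟩ := h a ha2
    refine ⟨h1, h2, ?_⟩
    intro w hw haw x hxa hxw
    rcases mem_insert.1 hw with rfl | hw
    · rw [Function.update_self] at hxw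
      exact hd a ha2 x (by simpa using hxw) hxa
    · rw [Function.update_of_ne (hne w hw)] at hxw
      exact h3 w hw haw x hxa hxw

lemma Setup.rsq (hS : Setup G d η m) : √d * √d = d := Real.mul_self_sqrt hS.d0.le

lemma Setup.r_ge (hS : Setup G d η m) : (m : ℝ) ^ 100 ≤ √d := by
  apply Real.le_sqrt_of_sq_le
  rw [← pow_mul]
  exact hS.hd

lemma Setup.r0 (hS : Setup G d η m) : 0 < √d := Real.sqrt_pos.2 hS.d0

lemma Setup.rabsorb (hS : Setup G d η m) {a b : ℕ} (h : a + 1 ≤ b) :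
    1000 * (√d * (m : ℝ) ^ a) ≤ √d * (m : ℝ) ^ b := by
  have h1 := hS.pw h
  have h2 := hS.m1000
  have h3 := hS.r0
  have h4 : 1000 * (m : ℝ) ^ a ≤ (m : ℝ) ^ (a + 1) := by
    rw [pow_succ]
    have : (0 : ℝ) < (m : ℝ) ^ a := by have := hS.m1; positivity
    nlinarith
  nlinarith

lemma Setup.r_le_d (hS : Setup G d η m) {a : ℕ} (h : a ≤ 100) : √d * (m : ℝ) ^ a ≤ d := by
  conv_rhs => rw [← hS.rsq]
  exact mul_le_mul_of_nonneg_left ((hS.pw h).trans hS.r_ge) hS.r0.le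

/-- Number of paths in a raw unit. -/
noncomputable def H0 (d : ℝ) (m : ℕ) : ℕ := ⌈2 * √d * (m : ℝ) ^ 6⌉₊ + 200 * m ^ 3

lemma Setup.H0_le (hS : Setup G d η m) : (H0 d m : ℝ) ≤ √d * (m : ℝ) ^ 7 := by
  have h0 := hS.r0
  have hm := hS.m1
  have h1 : (⌈2 * √d * (m : ℝ) ^ 6⌉₊ : ℝ) < 2 * √d * (m : ℝ) ^ 6 + 1 :=
    Nat.ceil_lt_add_one (by positivity)
  have h2 := hS.rabsorb (show 6 + 1 ≤ 7 by norm_num)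
  have h3 : (m : ℝ) ^ 3 ≤ √d * (m : ℝ) ^ 6 := by
    have := hS.pw (show 3 ≤ 6 by norm_num)
    have h4 : 1 ≤ √d := (one_le_pow₀ hm).trans hS.r_ge
    nlinarith [pow_pos (by linarith : (0 : ℝ) < m) 6]
  have h5 : (1 : ℝ) ≤ (m : ℝ) ^ 3 := one_le_pow₀ hm
  unfold H0
  push_cast
  linarith

lemma Setup.big_fam (hS : Setup G d η m) (W : Finset V) (hW : (W.card : ℝ) ≤ d * (m : ℝ) ^ 32)
    (I1 I2 : Finset V) (Λ1 Λ2 : V → Finset V) (q1 q2 H : ℕ)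
    (hI1 : I1.card = m ^ 36) (hI2 : √d * (m : ℝ) ^ 49 ≤ I2.card)
    (hI2' : (I2.card : ℝ) ≤ √d * (m : ℝ) ^ 50)
    (hq1 : d / 4 ≤ q1) (hq2 : √d * (m : ℝ) ^ 23 ≤ q2) (hH : (H : ℝ) ≤ √d * (m : ℝ) ^ 9)
    (hs1 : Stars G W I1 Λ1 q1) (hs2 : Stars G (W ∪ I1) I2 Λ2 q2) :
    ∃ z ∈ I1, ∃ J ⊆ I2, ∃ S, Fam G W (I1 ∪ I2) (2 * m + 2) z J S ∧ H ≤ J.card := by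
  by_contra hcon
  push Not at hcon
  have hmax : ∀ z, ∃ J S, J ⊆ I2 ∧ Fam G W (I1 ∪ I2) (2 * m + 2) z J S ∧
      ∀ J' S', J' ⊆ I2 → Fam G W (I1 ∪ I2) (2 * m + 2) z J' S' → J'.card ≤ J.card := by
    intro z
    obtain ⟨J, hJ, hJm⟩ := exists_max_image
      (I2.powerset.filter fun J => ∃ S, Fam G W (I1 ∪ I2) (2 * m + 2) z J S) card
      ⟨∅, by simp [Fam]⟩
    rw [mem_filter, mem_powerset] at hJ
    obtain ⟨h1, S, h2⟩ := hJ
    exact ⟨J, S, h1, h2, fun J' S' h3 h4 => hJm J' (by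
      rw [mem_filter, mem_powerset]; exact ⟨h3, S', h4⟩)⟩
  choose J S hJ hF hM using hmax
  have hm0 := hS.m1
  have hd0 := hS.d0
  have hr0 := hS.r0
  set R := I1.biUnion fun z => (J z).biUnion (S z) with hR
  have hRc : (R.card : ℝ) ≤ √d * (m : ℝ) ^ 48 := by
    have h1 : R.card ≤ I1.card * (H * (2 * m + 3)) := by
      refine card_biUnion_le_card_mul _ _ _ fun z hz => ?_
      calc ((J z).biUnion (S z)).card ≤ (J z).card * (2 * m + 3) :=
            card_biUnion_le_card_mul _ _ _ fun u hu => (hF z).card_le hu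
        _ ≤ H * (2 * m + 3) :=
            Nat.mul_le_mul_right _ (hcon z hz (J z) (hJ z) (S z) (hF z)).le
    have h2 : (R.card : ℝ) ≤ (m : ℝ) ^ 36 * (H * (2 * m + 3)) := by
      rw [hI1] at h1; exact_mod_cast h1
    calc (R.card : ℝ) ≤ (m : ℝ) ^ 36 * (H * (2 * m + 3)) := h2
      _ ≤ (m : ℝ) ^ 36 * ((√d * (m : ℝ) ^ 9) * (m ^ 3)) := by
          have h3 : 2 * (m : ℝ) + 3 ≤ (m : ℝ) ^ 3 := by
            have := hS.m1000
            have : (m : ℝ) * 1000 ≤ m ^ 3 := by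
              have h4 : (m : ℝ) ^ 3 = m * (m * m) := by ring
              have h5 : (1000 : ℝ) ≤ m * m := by nlinarith
              rw [h4]; gcongr
            linarith
          gcongr
      _ = _ := by ring
  set X := W ∪ I1 ∪ I2 ∪ R with hX
  have hXc : (X.card : ℝ) ≤ d * (m : ℝ) ^ 33 := by
    have h1 : X.card ≤ W.card + I1.card + I2.card + R.card := by
      have e1 := card_union_le (W ∪ I1 ∪ I2) R
      have e2 := card_union_le (W ∪ I1) I2
      have e3 := card_union_le W I1
      rw [hX]; omega
    have h2 : (X.card : ℝ) ≤ W.card + I1.card + I2.card + R.card := by exact_mod_cast h1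
    have h3 : (I1.card : ℝ) ≤ d := by
      rw [hI1]; push_cast; exact hS.pw_le_d (by norm_num)
    have h4 := hS.r_le_d (show 50 ≤ 100 by norm_num)
    have h5 := hS.r_le_d (show 48 ≤ 100 by norm_num)
    have h6 := hS.absorb (show 32 + 1 ≤ 33 by norm_num)
    have h7 : d ≤ d * (m : ℝ) ^ 32 := le_mul_of_one_le_right hd0.le (one_le_pow₀ hm0)
    linarith
  set A := I1.biUnion Λ1 \ X with hA
  set B := (I2 \ R).biUnion Λ2 \ X with hB
  have hAc : d * (m : ℝ) ^ 34 ≤ A.card := by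
    have h1 : (I1.biUnion Λ1).card = I1.card * q1 := by
      rw [card_biUnion (fun u hu w hw huw => hs1.2 u hu w hw huw)]
      rw [sum_congr rfl fun u hu => (hs1.1 u hu).2.1]
      simp
    have h2 : (I1.biUnion Λ1).card ≤ A.card + X.card := by
      have := le_card_sdiff X (I1.biUnion Λ1)
      rw [← hA] at this
      omega
    have h3 : (m : ℝ) ^ 36 * q1 ≤ A.card + X.card := by
      rw [h1, hI1] at h2; exact_mod_cast h2
    have h4 : (m : ℝ) ^ 36 * (d / 4) ≤ (m : ℝ) ^ 36 * q1 := by gcongr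
    have h5 := hS.absorb (show 35 + 1 ≤ 36 by norm_num)
    have h6 := hS.absorb (show 34 + 1 ≤ 35 by norm_num)
    have h7 := hS.absorb (show 33 + 1 ≤ 35 by norm_num)
    have h8 : 0 < d * (m : ℝ) ^ 34 := by positivity
    linarith
  have hBc : d * (m : ℝ) ^ 34 ≤ B.card := by
    have h1 : ((I2 \ R).biUnion Λ2).card = (I2 \ R).card * q2 := by
      rw [card_biUnion (fun u hu w hw huw =>
        hs2.2 u (mem_sdiff.1 hu).1 w (mem_sdiff.1 hw).1 huw)]
      rw [sum_congr rfl fun u hu => (hs2.1 u (mem_sdiff.1 hu).1).2.1]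
      simp
    have h2 : ((I2 \ R).biUnion Λ2).card ≤ B.card + X.card := by
      have := le_card_sdiff X ((I2 \ R).biUnion Λ2)
      rw [← hB] at this
      omega
    have h3 : ((I2 \ R).card : ℝ) * q2 ≤ B.card + X.card := by
      rw [h1] at h2; exact_mod_cast h2
    have h4 : (I2.card : ℝ) ≤ (I2 \ R).card + R.card := by
      have := le_card_sdiff R I2
      exact_mod_cast (by omega : I2.card ≤ (I2 \ R).card + R.card)
    have h5 := hS.rabsorb (show 48 + 1 ≤ 49 by norm_num)
    have h5' : 0 < √d * (m : ℝ) ^ 48 := by positivity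
    have h6 : √d * (m : ℝ) ^ 48 ≤ (I2 \ R).card := by linarith
    have h7 : d * (m : ℝ) ^ 71 ≤ (I2 \ R).card * q2 := by
      calc d * (m : ℝ) ^ 71 = (√d * (m : ℝ) ^ 48) * (√d * (m : ℝ) ^ 23) := by
            
            rw [show √d * (m : ℝ) ^ 48 * (√d * (m : ℝ) ^ 23) = (√d * √d) * (m : ℝ) ^ 71 by ring,
              hS.rsq]
        _ ≤ _ := by gcongr
    have h8 := hS.absorb (show 34 + 1 ≤ 71 by norm_num)
    have h9 := hS.absorb (show 33 + 1 ≤ 71 by norm_num)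
    have : 0 < d * (m : ℝ) ^ 34 := by positivity
    linarith
  have hdd : d ≤ d * (m : ℝ) ^ 34 := le_mul_of_one_le_right hd0.le (one_le_pow₀ hm0)
  have hXm : (X.card : ℝ) * m ≤ d * (m : ℝ) ^ 34 := by
    calc (X.card : ℝ) * m ≤ d * (m : ℝ) ^ 33 * m := by gcongr
      _ = _ := by ring
  obtain ⟨a, ha, b, hb, p, hp, hpl, hpX⟩ := hS.connect A B X (hdd.trans hAc) (hdd.trans hBc)
    (by linarith) (by linarith) (fun a ha => (mem_sdiff.1 ha).2) (fun a ha => (mem_sdiff.1 ha).2)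
  obtain ⟨z, hz, haz⟩ := mem_biUnion.1 (mem_sdiff.1 ha).1
  obtain ⟨u, hu, hbu⟩ := mem_biUnion.1 (mem_sdiff.1 hb).1
  obtain ⟨hu2, huR⟩ := mem_sdiff.1 hu
  have hza : G.Adj z a := ((hs1.1 z hz).2.2 a haz).1
  have hbu' : G.Adj b u := ((hs2.1 u hu2).2.2 b hbu).1.symm
  have hzu : z ≠ u := by
    rintro rfl
    exact (hs2.1 z hu2).1 (mem_union_right _ hz)
  have hzX : z ∈ X := by simp [hX, hz]
  have huX : u ∈ X := by simp [hX, hu2]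
  have hzp : z ∉ p.support := fun h => hpX z h hzX
  have hup : u ∉ p.support := fun h => hpX u h huX
  have hpath : ((p.concat hbu').cons hza).IsPath := by
    rw [SimpleGraph.Walk.cons_isPath_iff]
    refine ⟨hp.concat hup hbu', ?_⟩
    rw [SimpleGraph.Walk.support_concat]
    simp [hzp, hzu]
  have hsup : ∀ x ∈ ((p.concat hbu').cons hza).support, x = z ∨ x ∈ p.support ∨ x = u := by
    intro x hx
    rw [SimpleGraph.Walk.support_cons, SimpleGraph.Walk.support_concat] at hx
    simpa using hx
  have huJ : u ∉ J z := fun h => huR (mem_biUnion.2 ⟨z, hz, mem_biUnion.2 ⟨u, h, ((hF z).mem h).1⟩⟩)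
  have hnew := (hF z).insert huJ _ hpath (by simp) (by simp; omega) (by
    intro x hx
    rcases hsup x hx with rfl | hx | rfl
    · exact ⟨(hs1.1 x hz).1, fun _ => Or.inl rfl⟩
    · have := hpX x hx
      simp only [hX, mem_union, not_or] at this
      refine ⟨this.1.1.1, fun h => ?_⟩
      rcases mem_union.1 h with h | h
      · exact absurd h this.1.1.2
      · exact absurd h this.1.2
    · exact ⟨fun h => (hs2.1 x hu2).1 (mem_union_left _ h), fun _ => Or.inr rfl⟩) (by
    intro w hw x hx hxw
    have hxR : x ∈ R := mem_biUnion.2 ⟨z, hz, mem_biUnion.2 ⟨w, hw, hxw⟩⟩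
    rcases hsup x hx with rfl | hx | rfl
    · rfl
    · exact absurd (mem_union_right _ hxR) (hpX x hx)
    · exact absurd hxR huR)
  have := hM z _ _ (by
    intro y hy
    rcases mem_insert.1 hy with rfl | hy
    · exact hu2
    · exact hJ z hy) hnew
  rw [card_insert_of_notMem huJ] at this
  omega
/-- A unit before pruning. -/
structure Raw (G : SimpleGraph V) (W : Finset V) (d : ℝ) (m : ℕ) (z : V) (J : Finset V)
    (S Λ : V → Finset V) (s : ℕ) : Prop where
  zW : z ∉ W
  Jc : J.card = H0 d m
  s0 : 0 < s
  sm : s < 10 * m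
  paths : ∀ u ∈ J, ∃ p : G.Walk z u, p.IsPath ∧ p.length = s ∧ p.support.toFinset = S u
  SW : ∀ u ∈ J, ∀ x ∈ S u, x ∉ W
  Sd : ∀ u ∈ J, ∀ w ∈ J, u ≠ w → ∀ x ∈ S u, x ∈ S w → x = z
  Λc : ∀ u ∈ J, √d * (m : ℝ) ^ 23 ≤ ((Λ u).card : ℝ)
  Λa : ∀ u ∈ J, ∀ x ∈ Λ u, G.Adj u x ∧ x ∉ W
  Λd : ∀ u ∈ J, ∀ w ∈ J, u ≠ w → Disjoint (Λ u) (Λ w)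

lemma Setup.raw (hS : Setup G d η m) (W : Finset V) (hW : (W.card : ℝ) ≤ d * (m : ℝ) ^ 32) :
    ∃ z J S Λ s, Raw G W d m z J S Λ s := by
  have hm0 := hS.m1
  have hmK := hS.m1000
  have hd0 := hS.d0
  have hr0 := hS.r0
  have hr1 : 1 ≤ √d := (one_le_pow₀ hm0).trans hS.r_ge
  have hd1000 : 1000 ≤ d := by
    have := hS.pw_le_d (show 1 ≤ 200 by norm_num)
    rw [pow_one] at this; linarith
  have hq1 : (⌊d / 2⌋₊ : ℝ) ≤ d / 2 := Nat.floor_le (by linarith)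
  have hq1' : d / 4 ≤ (⌊d / 2⌋₊ : ℝ) := by
    have := Nat.lt_floor_add_one (d / 2)
    linarith
  have hdm : d ≤ d * (m : ℝ) ^ 32 := le_mul_of_one_le_right hd0.le (one_le_pow₀ hm0)
  obtain ⟨I1, Λ1, hI1, hs1⟩ := hS.stars W ⌊d / 2⌋₊ hq1 (m ^ 36) (by
    have h1 := hS.absorb (show 32 + 1 ≤ 80 by norm_num)
    have h2 := hS.absorb (show 36 + 1 ≤ 80 by norm_num)
    have h3 : ((m ^ 36 : ℕ) : ℝ) * ((⌊d / 2⌋₊ : ℝ) + 1) ≤ d * (m : ℝ) ^ 36 := by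
      push_cast
      rw [mul_comm d]
      gcongr
      linarith
    have : 0 < d * (m : ℝ) ^ 36 := by positivity
    linarith)
  set q2 := ⌈√d * (m : ℝ) ^ 23⌉₊ with hq2
  set N2 := ⌈√d * (m : ℝ) ^ 49⌉₊ with hN2
  have hq2l : √d * (m : ℝ) ^ 23 ≤ q2 := Nat.le_ceil _
  have hN2l : √d * (m : ℝ) ^ 49 ≤ N2 := Nat.le_ceil _
  have one_le : ∀ a : ℕ, 1 ≤ √d * (m : ℝ) ^ a := fun a =>
    one_le_mul_of_one_le_of_one_le hr1 (one_le_pow₀ hm0)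
  have hq2u : (q2 : ℝ) + 1 ≤ √d * (m : ℝ) ^ 24 := by
    have h1 : (q2 : ℝ) < √d * (m : ℝ) ^ 23 + 1 := Nat.ceil_lt_add_one (by positivity)
    have h2 := hS.rabsorb (show 23 + 1 ≤ 24 by norm_num)
    have := one_le 23
    linarith
  have hN2u : (N2 : ℝ) ≤ √d * (m : ℝ) ^ 50 := by
    have h1 : (N2 : ℝ) < √d * (m : ℝ) ^ 49 + 1 := Nat.ceil_lt_add_one (by positivity)
    have h2 := hS.rabsorb (show 49 + 1 ≤ 50 by norm_num)
    have := one_le 49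
    linarith
  obtain ⟨I2, Λ2, hI2, hs2⟩ := hS.stars (W ∪ I1) q2 (by
      have h1 := hS.r_le_d (show 25 ≤ 100 by norm_num)
      have h2 := hS.rabsorb (show 24 + 1 ≤ 25 by norm_num)
      linarith) N2 (by
    have h1 := hS.absorb (show 32 + 1 ≤ 80 by norm_num)
    have h2 := hS.absorb (show 74 + 1 ≤ 80 by norm_num)
    have h3 : (N2 : ℝ) * ((q2 : ℝ) + 1) ≤ d * (m : ℝ) ^ 74 := by
      calc (N2 : ℝ) * ((q2 : ℝ) + 1) ≤ (√d * (m : ℝ) ^ 50) * (√d * (m : ℝ) ^ 24) := by gcongr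
        _ = (√d * √d) * (m : ℝ) ^ 74 := by ring
        _ = _ := by rw [hS.rsq]
    have h4 : ((W ∪ I1).card : ℝ) ≤ W.card + I1.card := by exact_mod_cast card_union_le _ _
    have h5 : (I1.card : ℝ) ≤ d := by
      rw [hI1]; push_cast; exact hS.pw_le_d (by norm_num)
    have : 0 < d * (m : ℝ) ^ 74 := by positivity
    linarith)
  have hH : (((2 * m + 4) * H0 d m : ℕ) : ℝ) ≤ √d * (m : ℝ) ^ 9 := by
    push_cast
    calc (2 * (m : ℝ) + 4) * (H0 d m : ℝ) ≤ (m ^ 2) * (√d * (m : ℝ) ^ 7) := by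
          have := hS.H0_le
          have h3 : 2 * (m : ℝ) + 4 ≤ m ^ 2 := by nlinarith
          gcongr
      _ = _ := by ring
  obtain ⟨z, hz, J, hJ, S, hF, hJc⟩ := hS.big_fam W hW I1 I2 Λ1 Λ2 _ _ _ hI1 (by rw [hI2]; exact hN2l)
    (by rw [hI2]; exact hN2u) hq1' hq2l hH hs1 hs2
  obtain ⟨y, hy, hyc⟩ := exists_le_card_fiber_of_mul_le_card_of_maps_to
    (s := J) (t := Finset.range (2 * m + 4)) (f := fun u => (S u).card) (n := H0 d m)
    (fun u hu => by have := hF.card_le hu; simp; omega) ⟨0, by simp⟩ (by simpa using hJc)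
  obtain ⟨J', hJ', hJ'c⟩ := exists_subset_card_eq hyc
  have hsub : ∀ u ∈ J', u ∈ J ∧ (S u).card = y := fun u hu => by
    have := hJ' hu
    simpa using this
  have hlen : ∀ u ∈ J', ∃ p : G.Walk z u, p.IsPath ∧ 0 < p.length ∧ p.length ≤ 2 * m + 2 ∧
      p.length = y - 1 ∧ p.support.toFinset = S u := by
    intro u hu
    obtain ⟨⟨p, h1, h2, h3, h4⟩, _⟩ := hF u (hsub u hu).1
    refine ⟨p, h1, h2, h3, ?_, h4⟩
    have h5 := (hsub u hu).2
    rw [← h4, List.toFinset_card_of_nodup h1.support_nodup, SimpleGraph.Walk.length_support] at h5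
    omega
  have hH0 : 0 < H0 d m := by
    unfold H0
    have := hS.hm
    positivity
  obtain ⟨u0, hu0⟩ : J'.Nonempty := card_pos.1 (by omega)
  obtain ⟨p0, _, h2, h3, h4, _⟩ := hlen u0 hu0
  have hI2m : ∀ u ∈ J', u ∈ I2 := fun u hu => hJ (hsub u hu).1
  refine ⟨z, J', S, Λ2, y - 1, (hs1.1 z hz).1, hJ'c, by omega, ?_, ?_, ?_, ?_, ?_, ?_, ?_⟩
  · have := hS.hm; omega
  · intro u hu
    obtain ⟨p, h1, _, _, h4, h5⟩ := hlen u hu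
    exact ⟨p, h1, h4, h5⟩
  · intro u hu x hx
    exact ((hF u (hsub u hu).1).2.1 x hx).1
  · intro u hu w hw huw x hx hx'
    exact (hF u (hsub u hu).1).2.2 w (hsub w hw).1 huw x hx hx'
  · intro u hu
    rw [(hs2.1 u (hI2m u hu)).2.1]; exact hq2l
  · intro u hu x hx
    obtain ⟨h1, h2, _⟩ := (hs2.1 u (hI2m u hu)).2.2 x hx
    exact ⟨h1, fun h => h2 (mem_union_left _ h)⟩
  · intro u hu w hw huw
    exact hs2.2 u (hI2m u hu) w (hI2m w hw) huw

lemma Raw.int_card {W : Finset V} {z : V} {J : Finset V} {S Λ : V → Finset V} {s : ℕ}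
    (h : Raw G W d m z J S Λ s) (hS : Setup G d η m) :
    ((J.biUnion S).card : ℝ) ≤ √d * (m : ℝ) ^ 9 := by
  have h1 : (J.biUnion S).card ≤ H0 d m * (10 * m) := by
    rw [← h.Jc]
    refine card_biUnion_le_card_mul _ _ _ fun u hu => ?_
    obtain ⟨p, _, h2, h3⟩ := h.paths u hu
    rw [← h3]
    have := supp_card_le p
    have := h.sm
    omega
  have h2 : ((J.biUnion S).card : ℝ) ≤ H0 d m * (10 * m) := by exact_mod_cast h1
  have h3 := hS.m1000
  have hr0 := hS.r0
  calc ((J.biUnion S).card : ℝ) ≤ H0 d m * (10 * m) := h2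
    _ ≤ (√d * (m : ℝ) ^ 7) * (m * m) := by
        have := hS.H0_le
        gcongr
        linarith
    _ = _ := by ring

lemma Raw.prune {W : Finset V} {z : V} {J : Finset V} {S Λ : V → Finset V} {s : ℕ}
    (h : Raw G W d m z J S Λ s) (hS : Setup G d η m) (A : Finset V) (hz : z ∉ A)
    (hA : A.card ≤ 200 * m ^ 3) :
    ∃ U : UnitIn G ⌈2 * √d * (m : ℝ) ^ 6⌉₊ ⌈√d * (m : ℝ) ^ 22⌉₊ (10 * m),
      U.core = z ∧ (∀ x ∈ U.interior, x ∈ J.biUnion S) ∧ ∀ x ∈ U.verts, x ∉ W ∧ x ∉ A := by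
  have hm0 := hS.m1
  have hr0 := hS.r0
  set h0 := ⌈2 * √d * (m : ℝ) ^ 6⌉₊ with hh0
  set h1 := ⌈√d * (m : ℝ) ^ 22⌉₊ with hh1
  set R := J.biUnion S with hR
  have hJg : h0 ≤ (J.filter fun u => Disjoint (S u) A).card := by
    have e1 := card_filter_add_card_filter_not (s := J) (fun u => Disjoint (S u) A)
    have e2 : (J.filter fun u => ¬ Disjoint (S u) A).card ≤ A.card := by
      have hex : ∀ u, ∃ a, ¬ Disjoint (S u) A → a ∈ S u ∧ a ∈ A := by
        intro u
        by_cases hu : Disjoint (S u) A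
        · exact ⟨z, fun h' => absurd hu h'⟩
        · obtain ⟨a, h1, h2⟩ := not_disjoint_iff.1 hu
          exact ⟨a, fun _ => ⟨h1, h2⟩⟩
      choose f hf using hex
      refine card_le_card_of_injOn f (fun u hu => ?_) ?_
      · exact (hf u (mem_filter.1 hu).2).2
      · intro u hu w hw huw
        by_contra hne
        have a1 := mem_filter.1 hu
        have a2 := mem_filter.1 hw
        have b1 := hf u a1.2
        have b2 := hf w a2.2
        have := h.Sd u a1.1 w a2.1 hne (f u) b1.1 (by rw [huw]; exact b2.1)
        exact hz (this ▸ b1.2)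
    have e3 := h.Jc
    unfold H0 at e3
    omega
  obtain ⟨J', hJ', hJc⟩ := exists_subset_card_eq hJg
  have hm : ∀ u ∈ J', u ∈ J ∧ Disjoint (S u) A := fun u hu => by simpa using hJ' hu
  have hleaf : ∀ u ∈ J, ∃ f : Fin h1 → V, Function.Injective f ∧
      ∀ j, f j ∈ Λ u ∧ f j ∉ R ∧ f j ∉ A := by
    intro u hu
    have hc : h1 ≤ (Λ u \ (R ∪ A)).card := by
      have c1 := le_card_sdiff (R ∪ A) (Λ u)
      have c2 := card_union_le R A
      have c3 : ((Λ u).card : ℝ) ≤ (Λ u \ (R ∪ A)).card + R.card + A.card := by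
        exact_mod_cast (by omega : (Λ u).card ≤ (Λ u \ (R ∪ A)).card + R.card + A.card)
      have c4 := h.Λc u hu
      have c5 := h.int_card hS
      have c6 : (A.card : ℝ) ≤ 200 * (m : ℝ) ^ 3 := by exact_mod_cast hA
      have c7 : (h1 : ℝ) < √d * (m : ℝ) ^ 22 + 1 := Nat.ceil_lt_add_one (by positivity)
      have c8 := hS.rabsorb (show 22 + 1 ≤ 23 by norm_num)
      have c9 := hS.rabsorb (show 9 + 1 ≤ 22 by norm_num)
      have hr1 : 1 ≤ √d := (one_le_pow₀ hm0).trans hS.r_ge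
      have c10 : (m : ℝ) ^ 3 ≤ √d * (m : ℝ) ^ 22 := by
        have := hS.pw (show 3 ≤ 22 by norm_num)
        have : 0 < (m : ℝ) ^ 22 := by positivity
        nlinarith
      have c11 : (1 : ℝ) ≤ (m : ℝ) ^ 3 := one_le_pow₀ hm0
      have c12 : 0 < √d * (m : ℝ) ^ 9 := by positivity
      have : (h1 : ℝ) ≤ (Λ u \ (R ∪ A)).card := by linarith
      exact_mod_cast this
    obtain ⟨T, hT, hTc⟩ := exists_subset_card_eq hc
    refine ⟨fun j => ((T.equivFinOfCardEq hTc).symm j : V), ?_, ?_⟩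
    · intro i j hij
      exact (T.equivFinOfCardEq hTc).symm.injective (Subtype.ext hij)
    · intro j
      have := hT ((T.equivFinOfCardEq hTc).symm j).2
      simpa only [mem_sdiff, mem_union, not_or] using this
  set e := (J'.equivFinOfCardEq hJc).symm with he
  have hcJ : ∀ i, (e i : V) ∈ J := fun i => (hm _ (e i).2).1
  have hcD : ∀ i, Disjoint (S (e i)) A := fun i => (hm _ (e i).2).2
  have hinj : ∀ i j, (e i : V) = e j → i = j := fun i j hij => e.injective (Subtype.ext hij)
  choose pa hpa hpl hps using fun i => h.paths (e i) (hcJ i)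
  choose lf hlfi hlf using fun i => hleaf (e i) (hcJ i)
  have hmemS : ∀ i x, x ∈ (pa i).support ↔ x ∈ S (e i) := fun i x => by rw [← hps i]; simp
  have hmemR : ∀ i x, x ∈ (pa i).support → x ∈ R := fun i x hx =>
    mem_biUnion.2 ⟨_, hcJ i, (hmemS i x).1 hx⟩
  refine ⟨{ core := z, centre := fun i => e i, leaf := lf, path := pa, pathLen := s
            pathLen_pos := h.s0, pathLen_lt := h.sm, path_isPath := hpa, path_length := hpl
            star_adj := fun i j => (h.Λa _ (hcJ i) _ (hlf i j).1).1
            centre_inj := fun i j hij => hinj i j hij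
            leaf_inj := ?_
            centre_ne_leaf := ?_
            paths_disjoint := ?_
            leaf_notin_path := fun i j k hx => (hlf j k).2.1 (hmemR i _ hx) }, rfl, ?_, ?_⟩
  · rintro ⟨i, j⟩ ⟨i', j'⟩ hij
    simp only at hij
    have hii : i = i' := by
      by_contra hne
      have := h.Λd _ (hcJ i) _ (hcJ i') (fun h' => hne (hinj _ _ h'))
      exact disjoint_left.1 this (hlf i j).1 (hij ▸ (hlf i' j').1)
    subst hii
    rw [hlfi i hij]
  · intro i j k hh
    exact (hlf j k).2.1 (hh ▸ hmemR i _ (SimpleGraph.Walk.end_mem_support _))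
  · intro i j hij x hx hx'
    exact h.Sd _ (hcJ i) _ (hcJ j) (fun h' => hij (hinj _ _ h')) x ((hmemS i x).1 hx)
      ((hmemS j x).1 hx')
  · rintro x ⟨i, hx⟩
    exact hmemR i x hx
  · rintro x (⟨i, hx⟩ | ⟨⟨i, j⟩, rfl⟩)
    · have := (hmemS i x).1 hx
      exact ⟨h.SW _ (hcJ i) x this, disjoint_left.1 (hcD i) this⟩
    · exact ⟨(h.Λa _ (hcJ i) _ (hlf i j).1).2, (hlf i j).2.2⟩

lemma Setup.adjuster (hS : Setup G d η m) (W : Finset V)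
    (hW : (W.card : ℝ) ≤ d * (m : ℝ) ^ 10) :
    ∃ P : AdjusterIn G d m (100 * m ^ 3) (m ^ 2),
      P.z = 2 ∧ (∀ x ∈ P.verts, x ∉ W) ∧ 80 * m ^ 3 ≤ P.len ∧ P.len ≤ 80 * m ^ 3 + 80 * m := by
  have hm0 := hS.m1
  have hd0 := hS.d0
  set B := univ.filter fun v => v ∉ W ∧ ¬ Good G d m 10 W v with hB
  have hBc : (B.card : ℝ) ≤ d * (m : ℝ) ^ 30 := hS.few_not_good 10 (by norm_num) W hW
  have hW1 : ((W ∪ B).card : ℝ) ≤ d * (m : ℝ) ^ 31 := by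
    have h1 : ((W ∪ B).card : ℝ) ≤ W.card + B.card := by exact_mod_cast card_union_le _ _
    have h2 := hS.absorb (show 10 + 1 ≤ 31 by norm_num)
    have h3 := hS.absorb (show 30 + 1 ≤ 31 by norm_num)
    have : 0 < d * (m : ℝ) ^ 31 := by positivity
    linarith
  have hgood : ∀ v, v ∉ W ∪ B → Good G d m 10 W v := by
    intro v hv
    simp only [hB, mem_union, mem_filter, mem_univ, true_and, not_or, not_and, not_not] at hv
    exact hv.2 hv.1
  have hW1' : ((W ∪ B).card : ℝ) ≤ d * (m : ℝ) ^ 32 := by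
    have h3 := hS.absorb (show 31 + 1 ≤ 32 by norm_num)
    have : 0 < d * (m : ℝ) ^ 31 := by positivity
    linarith
  obtain ⟨z1, J1, S1, Λ1, s1, hR1⟩ := hS.raw (W ∪ B) hW1'
  obtain ⟨z2, J2, S2, Λ2, s2, hR2⟩ := hS.raw (W ∪ B ∪ J1.biUnion S1) (by
    have h1 : ((W ∪ B ∪ J1.biUnion S1).card : ℝ) ≤ (W ∪ B).card + (J1.biUnion S1).card := by
      exact_mod_cast card_union_le _ _
    have h2 := hR1.int_card hS
    have h3 := hS.absorb (show 31 + 1 ≤ 32 by norm_num)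
    have h4 := hS.r_le_d (show 9 ≤ 100 by norm_num)
    have : d ≤ d * (m : ℝ) ^ 31 := le_mul_of_one_le_right hd0.le (one_le_pow₀ hm0)
    linarith)
  have hz1 := hgood z1 hR1.zW
  have hz2 := hgood z2 fun h => hR2.zW (mem_union_left _ h)
  have hz1S : z1 ∈ J1.biUnion S1 := by
    have hH0 : 0 < H0 d m := by
      unfold H0
      have := hS.hm
      positivity
    obtain ⟨u, hu⟩ : J1.Nonempty := card_pos.1 (by rw [hR1.Jc]; exact hH0)
    obtain ⟨p, _, _, hp⟩ := hR1.paths u hu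
    exact mem_biUnion.2 ⟨u, hu, by rw [← hp]; simp⟩
  have hz12 : z1 ≠ z2 := by
    rintro rfl
    exact hR2.zW (mem_union_right _ hz1S)
  obtain ⟨l, A, hMP, hl1, hl2, hAc, hAW⟩ := hS.chain W hW hz1 hz2 hz12
  set A' := (A.erase z1).erase z2 with hA'
  have hA'c : A'.card ≤ 200 * m ^ 3 :=
    (card_le_card ((erase_subset _ _).trans (erase_subset _ _))).trans hAc
  obtain ⟨U1, hU1, hU1i, hU1v⟩ := hR1.prune hS A' (by simp [hA']) hA'c
  obtain ⟨U2, hU2, hU2i, hU2v⟩ := hR2.prune hS A' (by simp [hA']) hA'c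
  choose! p hp hpl hps using hMP
  have hmem : ∀ x ∈ A, x ∈ A' ∨ x = z1 ∨ x = z2 := by
    intro x hx
    simp only [hA', mem_erase]
    tauto
  have hlm : 2 * m ^ 2 + 80 * m ≤ 20 * m ^ 3 + 2 * m ^ 2 := by
    have := hS.hm
    nlinarith [Nat.pow_le_pow_left this 2, pow_succ m 2]
  refine ⟨{ z := 2, z_ge := by norm_num, z_le := by norm_num, F₁ := U1, F₂ := U2
            int_disj := ?_
            A := (A' : Set V)
            A_card := by rw [Set.ncard_coe_finset]; omega
            A_disj := ?_
            l' := l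
            l'_le := by omega
            paths := fun i => (p i (by omega)).copy hU1.symm hU2.symm
            paths_isPath := fun i => by
              rw [SimpleGraph.Walk.isPath_copy]; exact hp i (by omega)
            paths_length := fun i => by
              rw [SimpleGraph.Walk.length_copy]; exact hpl i (by omega)
            paths_support := fun i x hx => ?_ }, rfl, ?_, hl1, hl2⟩
  · ext x
    simp only [Set.mem_inter_iff, Set.mem_empty_iff_false, iff_false, not_and]
    intro h1 h2
    exact (hU2v x (Or.inl h2)).1 (mem_union_right _ (hU1i x h1))
  · ext x
    simp only [Set.mem_inter_iff, Set.mem_empty_iff_false, iff_false, not_and]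
    rintro h1 (h2 | h2)
    · exact (hU1v x h2).2 (by exact_mod_cast h1)
    · exact (hU2v x h2).2 (by exact_mod_cast h1)
  · rw [SimpleGraph.Walk.support_copy] at hx
    have := hmem x (hps i (by omega) x hx)
    rw [hU1, hU2]
    rcases this with h | h | h
    · exact Or.inl h
    · exact Or.inr (Or.inl h)
    · exact Or.inr (Or.inr h)
  · rintro x ((h1 | h1) | h1)
    · have h2 : x ∈ A' := by exact_mod_cast h1
      exact hAW x (mem_of_mem_erase (mem_of_mem_erase h2))
    · exact fun h => (hU1v x h1).1 (mem_union_left _ h)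
    · exact fun h => (hU2v x h1).1 (mem_union_left _ (mem_union_left _ h))
lemma exp_half_le {x : ℝ} (h0 : 0 ≤ x) (h1 : x ≤ 1) : Real.exp (x / 2) ≤ 1 + x := by
  have h2 := Real.add_one_le_exp (-(x / 2))
  rw [Real.exp_neg] at h2
  have h3 := Real.exp_pos (x / 2)
  have h4 : (-(x / 2) + 1) * Real.exp (x / 2) ≤ 1 := by
    calc (-(x / 2) + 1) * Real.exp (x / 2) ≤ (Real.exp (x / 2))⁻¹ * Real.exp (x / 2) := by gcongr
      _ = 1 := inv_mul_cancel₀ h3.ne'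
  have h5 : (1 + x) * (1 - x / 2) ≥ 1 := by nlinarith
  have h6 : 0 < 1 - x / 2 := by linarith
  have h7 : (Real.exp (x / 2)) * (1 - x / 2) ≤ (1 + x) * (1 - x / 2) := by linarith
  exact le_of_mul_le_mul_right h7 h6

lemma setup_of (eps1 eps2 L : ℝ) (heps1 : 0 < eps1) (heps1' : eps1 < 1) (heps2 : 0 < eps2)
    (heps2' : eps2 < 1) (hL1 : 1001 ≤ L) (hL2 : L ^ 1200 ≤ Real.exp L) (hL3 : 64 / eps1 ≤ L)
    (hL4 : Real.log (15 / eps2) ≤ L) (hd : 0 < d) (hbip : IsBipartite G)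
    (hexp : IsExpander G eps1 (eps2 * d)) (hdeg : minDegGe G d)
    (hL : (Fintype.card V : ℝ) = d * Real.exp L) (hmL : m = ⌊L ^ 4⌋₊) (hmd : (m : ℝ) ^ 200 ≤ d)
    (hno : ¬ HasTK G ⌈√d * (m : ℝ)⌉₊ 1) : Setup G d (eps1 / (4 * L ^ 2)) m := by
  have hL0 : 0 < L := by linarith
  have hmu : (m : ℝ) ≤ L ^ 4 := by rw [hmL]; exact Nat.floor_le (by positivity)
  have hml : L ^ 4 - 1 < m := by
    have := Nat.lt_floor_add_one (L ^ 4)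
    rw [hmL]; linarith
  have hL44 : L ≤ L ^ 4 := le_self_pow₀ (by linarith) (by norm_num)
  have hm1000 : 1000 ≤ m := by
    have : (1000 : ℝ) ≤ m := by linarith
    exact_mod_cast this
  have heL : 64 ≤ eps1 * L := by
    rw [div_le_iff₀ heps1] at hL3; linarith
  have hm2 : L ^ 4 / 2 ≤ (m : ℝ) - 1 := by linarith
  refine ⟨hm1000, hmd, ?_, ?_, ?_, ?_, ?_, ?_, hbip⟩
  · rw [hL]
    gcongr
    calc (m : ℝ) ^ 300 ≤ (L ^ 4) ^ 300 := by gcongr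
      _ = L ^ 1200 := by rw [← pow_mul]
      _ ≤ _ := hL2
  · have h1 : L ^ 4 / 2 ≤ (m : ℝ) := by linarith
    calc (8 : ℝ) ≤ eps1 * L * L / 8 := by nlinarith
      _ = eps1 / (4 * L ^ 2) * (L ^ 4 / 2) := by field_simp; norm_num
      _ ≤ _ := by gcongr
  · rw [hL]
    gcongr
    set x := eps1 / (4 * L ^ 2) / 4 with hx
    have hx0 : 0 ≤ x := by positivity
    have hx1 : x ≤ 1 := by
      rw [hx, div_div, div_le_one (by positivity)]
      nlinarith
    have h1 : Real.exp ((x / 2) * (m - 1 : ℕ)) ≤ (1 + x) ^ (m - 1) := by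
      rw [mul_comm, Real.exp_nat_mul]
      exact pow_le_pow_left₀ (Real.exp_pos _).le (exp_half_le hx0 hx1) _
    refine le_trans (Real.exp_le_exp.2 ?_) h1
    have h2 : ((m - 1 : ℕ) : ℝ) = (m : ℝ) - 1 := by
      rw [Nat.cast_sub (by omega)]; simp
    rw [h2]
    calc L ≤ eps1 * L * L / 64 := by nlinarith
      _ = x / 2 * (L ^ 4 / 2) := by rw [hx]; field_simp; norm_num
      _ ≤ _ := by gcongr
  · intro X hX1 hX2
    have hk : 0 < eps2 * d := by positivity
    have hX0 : (0 : ℝ) < X.card := by linarith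
    have hkd : eps2 * d ≤ d := by nlinarith
    have h1 := hexp (X : Set V) (by rw [Set.ncard_coe_finset]; linarith)
      (by rw [Set.ncard_coe_finset, Nat.card_eq_fintype_card]; exact hX2) ⊥ bot_le
    rw [Set.ncard_coe_finset] at h1
    have hav : 0 ≤ avgDeg G := by
      unfold avgDeg
      exact div_nonneg (finsum_nonneg fun v => by positivity) (by positivity)
    have hlog : Real.log (15 * (X.card : ℝ) / (eps2 * d)) ≤ 2 * L := by
      have e1 : 15 * (X.card : ℝ) / (eps2 * d) ≤ 15 / eps2 * Real.exp L := by
        rw [div_le_iff₀ hk]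
        have : (X.card : ℝ) ≤ d * Real.exp L := by rw [← hL]; linarith
        calc 15 * (X.card : ℝ) ≤ 15 * (d * Real.exp L) := by linarith
          _ = _ := by field_simp
      calc _ ≤ Real.log (15 / eps2 * Real.exp L) := Real.log_le_log (by positivity) e1
        _ = Real.log (15 / eps2) + L := by
            rw [Real.log_mul (by positivity) (Real.exp_pos _).ne', Real.log_exp]
        _ ≤ _ := by linarith
    have hlog0 : 0 < Real.log (15 * (X.card : ℝ) / (eps2 * d)) := by
      apply Real.log_pos
      rw [lt_div_iff₀ hk]
      linarith
    have heps : eps1 / (4 * L ^ 2) ≤ epsFun eps1 (eps2 * d) X.card := by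
      unfold epsFun
      rw [if_neg (by linarith)]
      have : Real.log (15 * (X.card : ℝ) / (eps2 * d)) ^ 2 ≤ 4 * L ^ 2 := by
        calc _ ≤ (2 * L) ^ 2 := by gcongr
          _ = _ := by ring
      gcongr
    have he0 : 0 ≤ epsFun eps1 (eps2 * d) X.card := le_trans (by positivity) heps
    have h2 := h1 (by simp; positivity)
    have h3 : (extNbr (G \ ⊥) (X : Set V)) = (en G X : Set V) := by
      ext w
      simp [extNbr, en]
    rw [h3, Set.ncard_coe_finset] at h2
    exact le_trans (by gcongr) h2
  · intro v
    have := hdeg v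
    have h3 : G.neighborSet v = (nb G v : Set V) := by
      ext w
      simp [mem_nb]
    rwa [h3, Set.ncard_coe_finset] at this
  · intro c W hW
    exact few_bad G d m c (by omega) hmd hno W hW
end

end Helpers

theorem statement_14 (eps1 eps2 : Real)
    (heps1 : 0 < eps1) (heps1' : eps1 < 1) (heps2 : 0 < eps2) (heps2' : eps2 < 1) :
    ∃ K₀ : Real, ∀ K : Real, K₀ ≤ K →
      ∀ (V : Type) [Fintype V] (G : SimpleGraph V) (n : Nat) (d : Real) (m : Nat),
        Nat.card V = n → 0 < d → IsBipartite G → IsExpander G eps1 (eps2 * d) →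
        minDegGe G d → K * d ≤ (n : Real) → m = ⌊Real.log ((n : Real) / d) ^ 4⌋₊ →
        (m : Real) ^ 200 ≤ d →
        ¬ HasTK G ⌈Real.sqrt d * (m : Real)⌉₊ 1 →
        ∀ W : Set V, (W.ncard : Real) ≤ d * (m : Real) ^ 10 →
        ∃ P : AdjusterIn G d m (100 * m ^ 3) (m ^ 2),
          P.z = 2 ∧ (∀ x ∈ P.verts, x ∉ W) ∧
          80 * m ^ 3 ≤ P.len ∧ P.len ≤ 80 * m ^ 3 + 80 * m := by

  have hev : ∀ᶠ L : ℝ in Filter.atTop, L ^ 1200 ≤ Real.exp L := by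
    have h := (Real.isLittleO_pow_exp_atTop (n := 1200)).bound (one_pos)
    filter_upwards [h, Filter.eventually_ge_atTop 0] with L hL hL0
    rw [one_mul, Real.norm_eq_abs, Real.norm_eq_abs, abs_of_nonneg (by positivity),
      abs_of_pos (Real.exp_pos _)] at hL
    exact hL
  obtain ⟨L0, hL0⟩ := Filter.eventually_atTop.1 (hev.and ((Filter.eventually_ge_atTop 1001).and
    ((Filter.eventually_ge_atTop (64 / eps1)).and
      (Filter.eventually_ge_atTop (Real.log (15 / eps2))))))
  refine ⟨Real.exp L0, fun K hK V _ G n d m hn hd hbip hexp hdeg hKn hm hmd hno W hW => ?_⟩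
  have hKd : Real.exp L0 ≤ (n : ℝ) / d := by
    rw [le_div_iff₀ hd]
    exact le_trans (by gcongr) hKn
  have hnd : 0 < (n : ℝ) / d := lt_of_lt_of_le (Real.exp_pos _) hKd
  have hL : L0 ≤ Real.log ((n : ℝ) / d) := by
    rw [Real.le_log_iff_exp_le hnd]; exact hKd
  obtain ⟨h1, h2, h3, h4⟩ := hL0 _ hL
  have hS : Setup G d _ m := setup_of eps1 eps2 _ heps1 heps1' heps2 heps2' h2 h1 h3 h4 hd hbip
    hexp hdeg (by
      rw [Real.exp_log hnd, ← Nat.card_eq_fintype_card, hn]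
      field_simp) hm hmd hno
  classical
  obtain ⟨P, hP1, hP2, hP3, hP4⟩ := hS.adjuster W.toFinset (by
    rw [← Set.ncard_eq_toFinset_card']; exact hW)
  exact ⟨P, hP1, fun x hx hxW => hP2 x hx (Set.mem_toFinset.2 hxW), hP3, hP4⟩
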